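/- arXiv:1510.07838 — 2 statements merged into one kernel-verified Lean document; each statement's English description precedes it below -/
import Mathlib

section
/- Let N ≥ 1, p, q ≥ 0, r₁, r₂ ∈ [1,∞), and set P = N(p/r₂ − 1/r₁), Q = N(q/r₁ − 1/r₂). Assume max{P,Q} > 0. Then there exist positive constants γ₃, T₂ and C (independent of the data) with the following property: for all nonnegative measurable u₀, v₀ on ℝ^N, setting W₀ = u₀^{r₁} + v₀^{r₂}, if S(t)W₀ ∈ L^∞(ℝ^N) for all t > 0 and ∫₀^T ‖S(s)W₀‖_{L^∞(ℝ^N)}^{max{P,Q}/N} ds ≤ γ₃ for some T > 0, then the system (S) possesses a solution (u,v) on ℝ^N × (0, min{T, T₂}] satisfying 0 ≤ u(x,t)^{r₁} + v(x,t)^{r₂} ≤ C [S(t)W₀](x) + C for a.e. x ∈ ℝ^N and all t ∈ (0, min{T, T₂}]. -/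
open MeasureTheory ENNReal Filter

noncomputable section

/-- Euclidean space `ℝ^N`. -/
abbrev Euc (N : ℕ) := EuclideanSpace ℝ (Fin N)

/-- The heat semigroup applied to a (nonnegative) function `φ` on `ℝ^N`, with values in `[0,∞]`:
`[S(t)φ](x) = ∫ (4πt)^{-N/2} exp(-|x-y|²/(4t)) φ(y) dy`. -/
noncomputable def heatS (N : ℕ) (t : ℝ) (φ : Euc N → ℝ) (x : Euc N) : ℝ≥0∞ :=
  ∫⁻ y, ENNReal.ofReal
    ((4 * Real.pi * t) ^ (-(N : ℝ) / 2) * Real.exp (-‖x - y‖ ^ 2 / (4 * t)) * φ y)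

/-- The `L^∞` norm of `S(t)φ` on `ℝ^N`. -/
noncomputable def heatSup (N : ℕ) (t : ℝ) (φ : Euc N → ℝ) : ℝ≥0∞ :=
  essSup (heatS N t φ) volume

/-- The `L^{r,∞}(E)` quasinorm: for `1 < r < ∞` it is
`sup_{λ>0} λ |{x ∈ E : |f x| > λ}|^{1/r}`; for `r = 1` (resp. `r = ∞`)
it is the usual `L¹(E)` (resp. `L^∞(E)`) norm. -/
noncomputable def wnorm (N : ℕ) (r : ℝ≥0∞) (f : Euc N → ℝ) (E : Set (Euc N)) : ℝ≥0∞ :=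
  if r = 1 then ∫⁻ x in E, ENNReal.ofReal |f x|
  else if r = ⊤ then essSup (fun x => ENNReal.ofReal |f x|) (volume.restrict E)
  else ⨆ (l : ℝ) (_ : 0 < l), ENNReal.ofReal l * (volume {x ∈ E | l < |f x|}) ^ (1 / r.toReal)

/-- The uniformly local quasinorm `|||f|||_{r,ρ} = sup_x ‖f‖_{L^{r,∞}(B(x,ρ))}`
(for `r = ∞` it is the `L^∞(ℝ^N)` norm). -/
noncomputable def ulocNorm (N : ℕ) (r : ℝ≥0∞) (ρ : ℝ) (f : Euc N → ℝ) : ℝ≥0∞ :=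
  if r = ⊤ then essSup (fun x => ENNReal.ofReal |f x|) volume
  else ⨆ x : Euc N, wnorm N r f (Metric.ball x ρ)

/-- `u ∈ L^∞(τ, T-τ; L^∞(ℝ^N))` for every `τ ∈ (0, T/2)`. -/
def LocBdd (N : ℕ) (T : ℝ≥0∞) (u : Euc N → ℝ → ℝ) : Prop :=
  ∀ τ : ℝ, 0 < τ → ENNReal.ofReal (2 * τ) < T →
    ∃ M : ℝ, ∀ t : ℝ, τ ≤ t → ENNReal.ofReal (t + τ) ≤ T →
      ∀ᵐ x ∂(volume : Measure (Euc N)), |u x t| ≤ M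

/-- Regularity requirements on a pair `(u,v)`: nonnegativity, joint measurability and
uniform boundedness away from `t = 0` and `t = T`. -/
def PairRegular (N : ℕ) (T : ℝ≥0∞) (u v : Euc N → ℝ → ℝ) : Prop :=
  (∀ x t, 0 ≤ u x t) ∧ (∀ x t, 0 ≤ v x t) ∧
  Measurable (Function.uncurry u) ∧ Measurable (Function.uncurry v) ∧
  LocBdd N T u ∧ LocBdd N T v

/-- The Duhamel identities for the system (S) `∂ₜu = Δu + v^p`, `∂ₜv = Δv + u^q` at time `t`. -/
def DuhamelSys (N : ℕ) (p q : ℝ) (u₀ v₀ : Euc N → ℝ) (u v : Euc N → ℝ → ℝ) (t : ℝ) : Prop :=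
  (∀ᵐ x ∂(volume : Measure (Euc N)), ENNReal.ofReal (u x t) =
      heatS N t u₀ x + ∫⁻ s in Set.Ioo 0 t, heatS N (t - s) (fun y => v y s ^ p) x) ∧
  (∀ᵐ x ∂(volume : Measure (Euc N)), ENNReal.ofReal (v x t) =
      heatS N t v₀ x + ∫⁻ s in Set.Ioo 0 t, heatS N (t - s) (fun y => u y s ^ q) x)

/-- The Duhamel inequalities (`≥`, with finite left-hand side) for the system (S) at time `t`. -/
def DuhamelSuperSys (N : ℕ) (p q : ℝ) (u₀ v₀ : Euc N → ℝ) (u v : Euc N → ℝ → ℝ) (t : ℝ) : Prop :=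
  (∀ᵐ x ∂(volume : Measure (Euc N)),
      heatS N t u₀ x + (∫⁻ s in Set.Ioo 0 t, heatS N (t - s) (fun y => v y s ^ p) x) ≤
        ENNReal.ofReal (u x t)) ∧
  (∀ᵐ x ∂(volume : Measure (Euc N)),
      heatS N t v₀ x + (∫⁻ s in Set.Ioo 0 t, heatS N (t - s) (fun y => u y s ^ q) x) ≤
        ENNReal.ofReal (v x t))

/-- `(u,v)` is a solution of the system (S) on `ℝ^N × (0,T)`. -/
def IsSolSys (N : ℕ) (p q : ℝ) (u₀ v₀ : Euc N → ℝ) (T : ℝ≥0∞) (u v : Euc N → ℝ → ℝ) : Prop :=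
  PairRegular N T u v ∧
  ∀ t : ℝ, 0 < t → ENNReal.ofReal t < T → DuhamelSys N p q u₀ v₀ u v t

/-- `(u,v)` is a supersolution of the system (S) on `ℝ^N × (0,T)`. -/
def IsSuperSys (N : ℕ) (p q : ℝ) (u₀ v₀ : Euc N → ℝ) (T : ℝ≥0∞) (u v : Euc N → ℝ → ℝ) : Prop :=
  PairRegular N T u v ∧
  ∀ t : ℝ, 0 < t → ENNReal.ofReal t < T → DuhamelSuperSys N p q u₀ v₀ u v t

/-- `(u,v)` is the minimal solution of the system (S) on `ℝ^N × (0,T)`. -/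
def IsMinSolSys (N : ℕ) (p q : ℝ) (u₀ v₀ : Euc N → ℝ) (T : ℝ≥0∞)
    (u v : Euc N → ℝ → ℝ) : Prop :=
  IsSolSys N p q u₀ v₀ T u v ∧
  ∀ u' v' : Euc N → ℝ → ℝ, IsSolSys N p q u₀ v₀ T u' v' →
    ∀ t : ℝ, 0 < t → ENNReal.ofReal t < T →
      (∀ᵐ x ∂(volume : Measure (Euc N)), u x t ≤ u' x t) ∧
      (∀ᵐ x ∂(volume : Measure (Euc N)), v x t ≤ v' x t)

/-- Regularity requirements on a scalar function `w`. -/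
def ScalarRegular (N : ℕ) (T : ℝ≥0∞) (w : Euc N → ℝ → ℝ) : Prop :=
  (∀ x t, 0 ≤ w x t) ∧ Measurable (Function.uncurry w) ∧ LocBdd N T w

/-- The Duhamel identity for the scalar problem (E) `∂ₜw = Δw + α w^A + β w^B` at time `t`. -/
def DuhamelScalar (N : ℕ) (α β A B : ℝ) (w₀ : Euc N → ℝ) (w : Euc N → ℝ → ℝ) (t : ℝ) : Prop :=
  ∀ᵐ x ∂(volume : Measure (Euc N)), ENNReal.ofReal (w x t) =
    heatS N t w₀ x +
      ∫⁻ s in Set.Ioo 0 t, heatS N (t - s) (fun y => α * w y s ^ A + β * w y s ^ B) x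

/-- The Duhamel inequality (`≥`, with finite left-hand side) for the scalar problem (E). -/
def DuhamelSuperScalar (N : ℕ) (α β A B : ℝ) (w₀ : Euc N → ℝ) (w : Euc N → ℝ → ℝ)
    (t : ℝ) : Prop :=
  ∀ᵐ x ∂(volume : Measure (Euc N)),
    heatS N t w₀ x +
        (∫⁻ s in Set.Ioo 0 t, heatS N (t - s) (fun y => α * w y s ^ A + β * w y s ^ B) x) ≤
      ENNReal.ofReal (w x t)

/-- `w` is a solution of the scalar problem (E) on `ℝ^N × (0,T)`. -/
def IsSolScalar (N : ℕ) (α β A B : ℝ) (w₀ : Euc N → ℝ) (T : ℝ≥0∞)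
    (w : Euc N → ℝ → ℝ) : Prop :=
  ScalarRegular N T w ∧
  ∀ t : ℝ, 0 < t → ENNReal.ofReal t < T → DuhamelScalar N α β A B w₀ w t

/-- `w` is a supersolution of the scalar problem (E) on `ℝ^N × (0,T)`. -/
def IsSuperScalar (N : ℕ) (α β A B : ℝ) (w₀ : Euc N → ℝ) (T : ℝ≥0∞)
    (w : Euc N → ℝ → ℝ) : Prop :=
  ScalarRegular N T w ∧
  ∀ t : ℝ, 0 < t → ENNReal.ofReal t < T → DuhamelSuperScalar N α β A B w₀ w t

/-- The Duhamel identities for the strongly coupled system (SC)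
`∂ₜu = Δu + u^{p₁} v^{p₂}`, `∂ₜv = Δv + u^{q₁} v^{q₂}` at time `t`. -/
def DuhamelSC (N : ℕ) (p₁ p₂ q₁ q₂ : ℝ) (u₀ v₀ : Euc N → ℝ) (u v : Euc N → ℝ → ℝ)
    (t : ℝ) : Prop :=
  (∀ᵐ x ∂(volume : Measure (Euc N)), ENNReal.ofReal (u x t) =
      heatS N t u₀ x +
        ∫⁻ s in Set.Ioo 0 t, heatS N (t - s) (fun y => u y s ^ p₁ * v y s ^ p₂) x) ∧
  (∀ᵐ x ∂(volume : Measure (Euc N)), ENNReal.ofReal (v x t) =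
      heatS N t v₀ x +
        ∫⁻ s in Set.Ioo 0 t, heatS N (t - s) (fun y => u y s ^ q₁ * v y s ^ q₂) x)

/-- `(u,v)` is a solution of the strongly coupled system (SC) on `ℝ^N × (0,T)`. -/
def IsSolSC (N : ℕ) (p₁ p₂ q₁ q₂ : ℝ) (u₀ v₀ : Euc N → ℝ) (T : ℝ≥0∞)
    (u v : Euc N → ℝ → ℝ) : Prop :=
  PairRegular N T u v ∧
  ∀ t : ℝ, 0 < t → ENNReal.ofReal t < T → DuhamelSC N p₁ p₂ q₁ q₂ u₀ v₀ u v t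

/-! ### Auxiliary material for the proof -/

/-- The heat kernel with values in `[0,∞]`. -/
noncomputable def hkG (N : ℕ) (t : ℝ) (z : Euc N) : ℝ≥0∞ :=
  ENNReal.ofReal ((4 * Real.pi * t) ^ (-(N : ℝ) / 2) * Real.exp (-‖z‖ ^ 2 / (4 * t)))

/-- The heat semigroup on `[0,∞]`-valued functions. -/
noncomputable def hkH (N : ℕ) (t : ℝ) (f : Euc N → ℝ≥0∞) (x : Euc N) : ℝ≥0∞ :=
  ∫⁻ y, hkG N t (x - y) * f y

lemma hkG_meas (N : ℕ) : Measurable (fun z : ℝ × Euc N => hkG N z.1 z.2) := by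
  unfold hkG
  fun_prop

lemma hkG_meas' (N : ℕ) {α : Type*} [MeasurableSpace α] {f : α → ℝ} {g : α → Euc N}
    (hf : Measurable f) (hg : Measurable g) : Measurable (fun a => hkG N (f a) (g a)) :=
  (hkG_meas N).comp (hf.prodMk hg)

lemma heatS_eq (N : ℕ) (t : ℝ) (φ : Euc N → ℝ) (hφ : ∀ y, 0 ≤ φ y) (x : Euc N) :
    heatS N t φ x = hkH N t (fun y => ENNReal.ofReal (φ y)) x := by
  unfold heatS hkH hkG
  refine lintegral_congr fun y => ?_
  rw [ENNReal.ofReal_mul' (hφ y)]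

lemma gauss_lint (N : ℕ) {b : ℝ} (hb : 0 < b) :
    ∫⁻ z : Euc N, ENNReal.ofReal (Real.exp (-b * ‖z‖ ^ 2)) =
      ENNReal.ofReal ((Real.pi / b) ^ ((N : ℝ) / 2)) := by
  have h := GaussianFourier.integral_rexp_neg_mul_sq_norm (V := Euc N) hb
  have hfr : Module.finrank ℝ (Euc N) = N := by simp
  rw [hfr] at h
  rw [← h, ofReal_integral_eq_lintegral_ofReal]
  · by_contra hni
    rw [integral_undef hni] at h
    have : 0 < (Real.pi / b) ^ ((N : ℝ) / 2) := by
      have := Real.pi_pos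
      positivity
    linarith
  · exact Eventually.of_forall fun x => (Real.exp_pos _).le

lemma hkG_lint (N : ℕ) {t : ℝ} (ht : 0 < t) (x : Euc N) :
    ∫⁻ y, hkG N t (x - y) = 1 := by
  have hpi := Real.pi_pos
  rw [lintegral_sub_left_eq_self (fun z => hkG N t z) x]
  have h : ∀ z : Euc N, hkG N t z = ENNReal.ofReal ((4 * Real.pi * t) ^ (-(N : ℝ) / 2)) *
      ENNReal.ofReal (Real.exp (-(1 / (4 * t)) * ‖z‖ ^ 2)) := by
    intro z
    unfold hkG
    rw [ENNReal.ofReal_mul (by positivity)]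
    congr 3
    ring
  simp_rw [h]
  rw [lintegral_const_mul' _ _ ENNReal.ofReal_ne_top, gauss_lint N (by positivity),
    ← ENNReal.ofReal_mul (by positivity)]
  have : Real.pi / (1 / (4 * t)) = 4 * Real.pi * t := by field_simp
  rw [this, ← Real.rpow_add (by positivity)]
  have : -(N : ℝ) / 2 + (N : ℝ) / 2 = 0 := by ring
  rw [this]
  simp

lemma hkG_exp_identity (N : ℕ) {σ s : ℝ} (hσ : 0 < σ) (hs : 0 < s) (x y z : Euc N) :
    -‖x - z‖ ^ 2 / (4 * σ) + -‖z - y‖ ^ 2 / (4 * s) =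
      -‖x - y‖ ^ 2 / (4 * (σ + s)) +
        -((σ + s) / (4 * σ * s)) *
          ‖((s / (σ + s)) • x + (σ / (σ + s)) • y) - z‖ ^ 2 := by
  have hne : σ + s ≠ 0 := by positivity
  have e1 : x - y = (x - z) - (y - z) := by abel
  have e2 : ((s / (σ + s)) • x + (σ / (σ + s)) • y) - z =
      (s / (σ + s)) • (x - z) + (σ / (σ + s)) • (y - z) := by
    have hz : z = (s / (σ + s)) • z + (σ / (σ + s)) • z := by
      rw [← add_smul]
      have : s / (σ + s) + σ / (σ + s) = 1 := by field_simp; ring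
      rw [this, one_smul]
    nth_rewrite 1 [hz]
    simp only [smul_sub]
    abel
  rw [e2, e1, norm_sub_rev z y]
  generalize x - z = a
  generalize y - z = b
  rw [norm_sub_sq_real, norm_add_sq_real, norm_smul, norm_smul, inner_smul_left,
    inner_smul_right, Real.norm_of_nonneg (by positivity), Real.norm_of_nonneg (by positivity)]
  simp only [conj_trivial]
  field_simp
  ring

lemma hkG_conv (N : ℕ) {σ s : ℝ} (hσ : 0 < σ) (hs : 0 < s) (x y : Euc N) :
    ∫⁻ z, hkG N σ (x - z) * hkG N s (z - y) = hkG N (σ + s) (x - y) := by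
  have hpi := Real.pi_pos
  set z0 : Euc N := (s / (σ + s)) • x + (σ / (σ + s)) • y with hz0
  have h : ∀ z : Euc N, hkG N σ (x - z) * hkG N s (z - y) =
      ENNReal.ofReal ((4 * Real.pi * σ) ^ (-(N : ℝ) / 2) * (4 * Real.pi * s) ^ (-(N : ℝ) / 2) *
        Real.exp (-‖x - y‖ ^ 2 / (4 * (σ + s)))) *
      ENNReal.ofReal (Real.exp (-((σ + s) / (4 * σ * s)) * ‖z0 - z‖ ^ 2)) := by
    intro z
    unfold hkG
    rw [← ENNReal.ofReal_mul (by positivity), ← ENNReal.ofReal_mul (by positivity)]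
    congr 1
    have := hkG_exp_identity N hσ hs x y z
    calc _ = (4 * Real.pi * σ) ^ (-(N : ℝ) / 2) * (4 * Real.pi * s) ^ (-(N : ℝ) / 2) *
          (Real.exp (-‖x - z‖ ^ 2 / (4 * σ)) * Real.exp (-‖z - y‖ ^ 2 / (4 * s))) := by ring
      _ = _ := by
        rw [← Real.exp_add, this, Real.exp_add]
        ring
  simp_rw [h]
  rw [lintegral_const_mul' _ _ ENNReal.ofReal_ne_top,
    lintegral_sub_left_eq_self
      (fun z : Euc N => ENNReal.ofReal (Real.exp (-((σ + s) / (4 * σ * s)) * ‖z‖ ^ 2))) z0,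
    gauss_lint N (by positivity), ← ENNReal.ofReal_mul (by positivity)]
  unfold hkG
  congr 1
  have e : (4 * Real.pi * σ) ^ (-(N : ℝ) / 2) * (4 * Real.pi * s) ^ (-(N : ℝ) / 2) *
      (Real.pi / ((σ + s) / (4 * σ * s))) ^ ((N : ℝ) / 2) =
      (4 * Real.pi * (σ + s)) ^ (-(N : ℝ) / 2) := by
    have e0 : -(N : ℝ) / 2 = -((N : ℝ) / 2) := by ring
    rw [e0, ← Real.mul_rpow (by positivity) (by positivity), Real.rpow_neg (by positivity),
      Real.rpow_neg (by positivity), ← Real.inv_rpow (by positivity),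
      ← Real.inv_rpow (by positivity), ← Real.mul_rpow (by positivity) (by positivity)]
    congr 1
    field_simp
  rw [← e]
  ring

lemma hkH_meas (N : ℕ) {f : Euc N → ℝ≥0∞} (hf : Measurable f) :
    Measurable (fun z : Euc N × ℝ => hkH N z.2 f z.1) := by
  unfold hkH
  refine Measurable.lintegral_prod_right'
    (f := fun w : (Euc N × ℝ) × Euc N => hkG N w.1.2 (w.1.1 - w.2) * f w.2) ?_
  exact (hkG_meas' N (by fun_prop) (by fun_prop)).mul (hf.comp measurable_snd)

lemma hkH_meas_x (N : ℕ) {f : Euc N → ℝ≥0∞} (hf : Measurable f) (t : ℝ) :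
    Measurable (fun x : Euc N => hkH N t f x) :=
  (hkH_meas N hf).comp (measurable_id.prodMk measurable_const)

lemma hkH_semigroup (N : ℕ) {σ s : ℝ} (hσ : 0 < σ) (hs : 0 < s) {f : Euc N → ℝ≥0∞}
    (hf : Measurable f) (x : Euc N) :
    hkH N σ (fun z => hkH N s f z) x = hkH N (σ + s) f x := by
  unfold hkH
  have h1 : ∀ z : Euc N, hkG N σ (x - z) * ∫⁻ y, hkG N s (z - y) * f y =
      ∫⁻ y, hkG N σ (x - z) * (hkG N s (z - y) * f y) := fun z =>
    (lintegral_const_mul' _ _ ENNReal.ofReal_ne_top).symm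
  simp_rw [h1]
  rw [lintegral_lintegral_swap]
  · refine lintegral_congr fun y => ?_
    rw [← hkG_conv N hσ hs x y, ← lintegral_mul_const]
    · refine lintegral_congr fun z => ?_
      rw [mul_assoc]
    · exact (hkG_meas' N measurable_const (by fun_prop)).mul
        (hkG_meas' N measurable_const (by fun_prop))
  · refine Measurable.aemeasurable ?_
    exact (hkG_meas' N measurable_const (by fun_prop)).mul
      ((hkG_meas' N measurable_const (by fun_prop)).mul (hf.comp measurable_snd))

lemma hkH_mono_ae (N : ℕ) (t : ℝ) {f g : Euc N → ℝ≥0∞} (h : ∀ᵐ y, f y ≤ g y) (x : Euc N) :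
    hkH N t f x ≤ hkH N t g x := by
  unfold hkH
  refine lintegral_mono_ae ?_
  filter_upwards [h] with y hy
  gcongr

lemma hkH_congr_ae (N : ℕ) (t : ℝ) {f g : Euc N → ℝ≥0∞} (h : ∀ᵐ y, f y = g y) (x : Euc N) :
    hkH N t f x = hkH N t g x := by
  unfold hkH
  refine lintegral_congr_ae ?_
  filter_upwards [h] with y hy
  rw [hy]

lemma hkH_jensen (N : ℕ) {t : ℝ} (ht : 0 < t) {a : ℝ} (ha : 0 < a) (ha1 : a ≤ 1)
    {f : Euc N → ℝ≥0∞} (hf : Measurable f) (x : Euc N) :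
    hkH N t (fun y => f y ^ a) x ≤ hkH N t f x ^ a := by
  have hGm : Measurable (fun y : Euc N => hkG N t (x - y)) :=
    hkG_meas' N measurable_const (by fun_prop)
  set μ : Measure (Euc N) := volume.withDensity (fun y => hkG N t (x - y)) with hμ
  have : IsProbabilityMeasure μ := ⟨by
    rw [hμ, withDensity_apply _ MeasurableSet.univ, Measure.restrict_univ, hkG_lint N ht]⟩
  have key : ∀ g : Euc N → ℝ≥0∞, Measurable g → hkH N t g x = ∫⁻ y, g y ∂μ := by
    intro g hg
    rw [hμ, lintegral_withDensity_eq_lintegral_mul _ hGm hg]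
    rfl
  rw [key _ (hf.pow_const a), key _ hf]
  have h := eLpNorm'_le_eLpNorm'_of_exponent_le (f := f) ha ha1 μ hf.aestronglyMeasurable
  simp only [eLpNorm'_eq_lintegral_enorm, enorm_eq_self, ENNReal.rpow_one, one_div, inv_one] at h
  have h2 := ENNReal.rpow_le_rpow h ha.le
  rwa [← ENNReal.rpow_mul, inv_mul_cancel₀ ha.ne', ENNReal.rpow_one] at h2

lemma rpow_iSup_mono (p : ℝ) (hp : 0 ≤ p) (f : ℕ → ℝ≥0∞) : (⨆ n, f n) ^ p = ⨆ n, f n ^ p := by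
  rcases hp.eq_or_lt with rfl | hp
  · simp
  · exact (ENNReal.orderIsoRpow p hp).map_iSup f

/-- The Duhamel operator. -/
noncomputable def hkD (N : ℕ) (f : Euc N → ℝ≥0∞) (p : ℝ) (V : Euc N → ℝ → ℝ≥0∞)
    (x : Euc N) (t : ℝ) : ℝ≥0∞ :=
  hkH N t f x + ∫⁻ s in Set.Ioo 0 t, hkH N (t - s) (fun y => V y s ^ p) x

lemma hkH_meas3 (N : ℕ) (p : ℝ) {V : Euc N → ℝ → ℝ≥0∞} (hV : Measurable (Function.uncurry V)) :
    Measurable (fun z : (Euc N × ℝ) × ℝ =>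
      hkH N (z.1.2 - z.2) (fun y => V y z.2 ^ p) z.1.1) := by
  unfold hkH
  refine Measurable.lintegral_prod_right'
    (f := fun w : ((Euc N × ℝ) × ℝ) × Euc N =>
      hkG N (w.1.1.2 - w.1.2) (w.1.1.1 - w.2) * V w.2 w.1.2 ^ p) ?_
  have h2 : Measurable (fun w : ((Euc N × ℝ) × ℝ) × Euc N => V w.2 w.1.2) :=
    hV.comp (measurable_snd.prodMk (measurable_snd.comp measurable_fst))
  exact (hkG_meas' N (by fun_prop) (by fun_prop)).mul (h2.pow_const p)

lemma hkD_meas (N : ℕ) {f : Euc N → ℝ≥0∞} (hf : Measurable f) (p : ℝ)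
    {V : Euc N → ℝ → ℝ≥0∞} (hV : Measurable (Function.uncurry V)) :
    Measurable (Function.uncurry (hkD N f p V)) := by
  have h : Function.uncurry (hkD N f p V) = fun z : Euc N × ℝ => hkH N z.2 f z.1 +
      ∫⁻ s, (fun w : (Euc N × ℝ) × ℝ => Set.indicator {w | 0 < w.2 ∧ w.2 < w.1.2}
        (fun z => hkH N (z.1.2 - z.2) (fun y => V y z.2 ^ p) z.1.1) w) (z, s) := by
    ext z
    rcases z with ⟨x, t⟩
    simp only [Function.uncurry, hkD]
    congr 1
    rw [← lintegral_indicator measurableSet_Ioo]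
    refine lintegral_congr fun s => ?_
    simp [Set.indicator]
  rw [h]
  refine (hkH_meas N hf).add (Measurable.lintegral_prod_right' ?_)
  refine (hkH_meas3 N p hV).indicator ?_
  exact (measurableSet_lt measurable_const measurable_snd).inter
    (measurableSet_lt measurable_snd (measurable_snd.comp measurable_fst))

lemma hkD_mono (N : ℕ) (f : Euc N → ℝ≥0∞) {p : ℝ} (hp : 0 ≤ p) {V V' : Euc N → ℝ → ℝ≥0∞}
    (x : Euc N) (t : ℝ) (h : ∀ s, 0 < s → s < t → ∀ y, V y s ≤ V' y s) :
    hkD N f p V x t ≤ hkD N f p V' x t := by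
  unfold hkD
  refine add_le_add le_rfl (setLIntegral_mono' measurableSet_Ioo fun s hs => ?_)
  refine hkH_mono_ae N _ (Eventually.of_forall fun y => ?_) x
  exact ENNReal.rpow_le_rpow (h s hs.1 hs.2 y) hp

lemma hkD_iSup (N : ℕ) (f : Euc N → ℝ≥0∞) {p : ℝ} (hp : 0 ≤ p)
    (V : ℕ → Euc N → ℝ → ℝ≥0∞) (hV : ∀ n, Measurable (Function.uncurry (V n)))
    (hmono : ∀ x t, Monotone fun n => V n x t) (x : Euc N) (t : ℝ) :
    hkD N f p (fun x t => ⨆ n, V n x t) x t = ⨆ n, hkD N f p (V n) x t := by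
  unfold hkD
  rw [← ENNReal.add_iSup]
  congr 1
  have hm : ∀ s, ∀ y, Monotone fun n => V n y s ^ p := fun s y i j hij =>
    ENNReal.rpow_le_rpow (hmono y s hij) hp
  have h1 : ∀ s, hkH N (t - s) (fun y => (⨆ n, V n y s) ^ p) x =
      ⨆ n, hkH N (t - s) (fun y => V n y s ^ p) x := by
    intro s
    unfold hkH
    rw [← lintegral_iSup]
    · refine lintegral_congr fun y => ?_
      simp only
      rw [rpow_iSup_mono p hp, ENNReal.mul_iSup]
    · intro n
      have h2 : Measurable (fun y : Euc N => V n y s) :=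
        (hV n).comp (measurable_id.prodMk measurable_const)
      exact (hkG_meas' N (by fun_prop) (by fun_prop)).mul (h2.pow_const p)
    · intro i j hij y
      exact mul_le_mul_right (hm s y hij) _
  simp_rw [h1]
  rw [lintegral_iSup]
  · intro n
    have h3 : Measurable (fun s : ℝ => (((x, t), s) : (Euc N × ℝ) × ℝ)) := by fun_prop
    have h4 := (hkH_meas3 N p (hV n)).comp h3
    simpa only [Function.comp_def] using h4
  · intro i j hij s
    exact hkH_mono_ae N _ (Eventually.of_forall fun y => hm s y hij) x

/-- Monotone iteration. -/
noncomputable def hkIt (N : ℕ) (p q : ℝ) (f g : Euc N → ℝ≥0∞) :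
    ℕ → (Euc N → ℝ → ℝ≥0∞) × (Euc N → ℝ → ℝ≥0∞)
  | 0 => (fun _ _ => 0, fun _ _ => 0)
  | n + 1 => (hkD N f p (hkIt N p q f g n).2, hkD N g q (hkIt N p q f g n).1)

lemma hkIt_meas (N : ℕ) (p q : ℝ) {f g : Euc N → ℝ≥0∞} (hf : Measurable f) (hg : Measurable g)
    (n : ℕ) : Measurable (Function.uncurry (hkIt N p q f g n).1) ∧
      Measurable (Function.uncurry (hkIt N p q f g n).2) := by
  induction n with
  | zero => exact ⟨measurable_const, measurable_const⟩
  | succ n ih => exact ⟨hkD_meas N hf p ih.2, hkD_meas N hg q ih.1⟩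

lemma hkIt_step (N : ℕ) {p q : ℝ} (hp : 0 ≤ p) (hq : 0 ≤ q) (f g : Euc N → ℝ≥0∞) (n : ℕ) :
    ∀ x t, (hkIt N p q f g n).1 x t ≤ (hkIt N p q f g (n + 1)).1 x t ∧
      (hkIt N p q f g n).2 x t ≤ (hkIt N p q f g (n + 1)).2 x t := by
  induction n with
  | zero => exact fun x t => ⟨zero_le, zero_le⟩
  | succ n ih =>
    exact fun x t => ⟨hkD_mono N f hp x t fun s _ _ y => (ih y s).2,
      hkD_mono N g hq x t fun s _ _ y => (ih y s).1⟩

/-- The supersolution bound for one Duhamel step. -/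
lemma hkD_super (N : ℕ) (f F : Euc N → ℝ≥0∞) (hF : Measurable F) (hf : Measurable f)
    (p a m : ℝ) (b : ℝ) (hp : 0 ≤ p) (ha : 0 < a) (ha1 : a ≤ 1) (hm : 0 < m)
    (hpa : b * p - a ≤ m) (D c : ℝ≥0∞) (hD1 : 1 ≤ D) (hDt : D ≠ ⊤) (hDa : 2 ≤ D ^ a)
    (hfF : ∀ y, f y ≤ F y ^ a)
    (M : ℝ → ℝ≥0∞) (hM : ∀ s, 0 < s → ∀ᵐ y, hkH N s F y ≤ M s) (hMt : ∀ s, 0 < s → M s < ⊤)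
    (t : ℝ) (ht : 0 < t) (hint : ∫⁻ s in Set.Ioo 0 t, (M s ^ m + 1) ≤ c)
    (hc : (2 * D) ^ m * c ≤ 2⁻¹)
    (x : Euc N) :
    hkD N f p (fun y s => (D * (hkH N s F y + 1)) ^ b) x t ≤ (D * (hkH N t F x + 1)) ^ a := by
  have hD0 : D ≠ 0 := (zero_lt_one.trans_le hD1).ne'
  by_cases htop : hkH N t F x = ⊤
  · rw [htop]
    simp [ENNReal.mul_top hD0, ENNReal.top_rpow_of_pos ha]
  have hwt : D * (hkH N t F x + 1) ≠ ⊤ := by finiteness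
  set w := D * (hkH N t F x + 1) with hw
  have part1 : hkH N t f x ≤ 2⁻¹ * w ^ a := by
    have h1 : hkH N t f x ≤ hkH N t F x ^ a :=
      (hkH_mono_ae N t (Eventually.of_forall hfF) x).trans (hkH_jensen N ht ha ha1 hF x)
    have h2 : 2 * hkH N t F x ^ a ≤ w ^ a := by
      calc 2 * hkH N t F x ^ a ≤ D ^ a * hkH N t F x ^ a := by gcongr
        _ = (D * hkH N t F x) ^ a := (ENNReal.mul_rpow_of_nonneg _ _ ha.le).symm
        _ ≤ w ^ a := by
          rw [hw]
          gcongr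
          exact le_self_add
    calc hkH N t f x ≤ hkH N t F x ^ a := h1
      _ = 2⁻¹ * (2 * hkH N t F x ^ a) := by
        rw [← mul_assoc, ENNReal.inv_mul_cancel (by simp) (by simp), one_mul]
      _ ≤ _ := by gcongr
  have part2 : ∀ s ∈ Set.Ioo 0 t,
      hkH N (t - s) (fun y => ((D * (hkH N s F y + 1)) ^ b) ^ p) x ≤
        (w ^ a * (2 * D) ^ m) * (M s ^ m + 1) := by
    intro s hs
    have hs0 := hs.1
    have hst : 0 < t - s := sub_pos.2 hs.2
    set L : ℝ≥0∞ := (D * (M s + 1)) ^ m with hL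
    have hLle : L ≤ (2 * D) ^ m * (M s ^ m + 1) := by
      have h1 : D * (M s + 1) ≤ (2 * D) * max (M s) 1 := by
        calc D * (M s + 1) ≤ D * (max (M s) 1 + max (M s) 1) := by
              gcongr
              · exact le_max_left _ _
              · exact le_max_right _ _
          _ = _ := by ring
      calc L ≤ ((2 * D) * max (M s) 1) ^ m := by
            rw [hL]; gcongr
        _ = (2 * D) ^ m * (max (M s) 1) ^ m := ENNReal.mul_rpow_of_nonneg _ _ hm.le
        _ ≤ _ := by
          gcongr
          rcases le_total (M s) 1 with h | h
          · rw [max_eq_right h, ENNReal.one_rpow]; exact le_add_self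
          · rw [max_eq_left h]; exact le_self_add
    have hpt : ∀ᵐ y, ((D * (hkH N s F y + 1)) ^ b) ^ p ≤ L * (D * (hkH N s F y + 1)) ^ a := by
      filter_upwards [hM s hs0] with y hy
      have hMs := hMt s hs0
      have hfin : hkH N s F y ≠ ⊤ := (hy.trans_lt hMs).ne
      set W := D * (hkH N s F y + 1) with hW
      have hWt : W ≠ ⊤ := by finiteness
      have hW1 : 1 ≤ W := one_le_mul hD1 le_add_self
      have hWL : W ≤ D * (M s + 1) := by rw [hW]; gcongr
      calc (W ^ b) ^ p = W ^ (b * p) := (ENNReal.rpow_mul _ _ _).symm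
        _ ≤ W ^ (m + a) := ENNReal.rpow_le_rpow_of_exponent_le hW1 (by linarith)
        _ = W ^ m * W ^ a :=
          ENNReal.rpow_add _ _ (zero_lt_one.trans_le hW1).ne' hWt
        _ ≤ L * W ^ a := by
          rw [hL]; gcongr
    have hLt : L ≠ ⊤ := by
      have := hMt s hs0
      rw [hL]
      exact ENNReal.rpow_ne_top_of_nonneg hm.le (by finiteness)
    have hHm := hkH_meas_x N hF s
    have hGm : Measurable (fun y : Euc N => hkG N (t - s) (x - y)) :=
      hkG_meas' N measurable_const (by fun_prop)
    calc _ ≤ hkH N (t - s) (fun y => L * (D * (hkH N s F y + 1)) ^ a) x := hkH_mono_ae N _ hpt x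
      _ = L * hkH N (t - s) (fun y => (D * (hkH N s F y + 1)) ^ a) x := by
        unfold hkH
        rw [← lintegral_const_mul' _ _ hLt]
        exact lintegral_congr fun y => by ring
      _ ≤ L * hkH N (t - s) (fun y => (D * (hkH N s F y + 1))) x ^ a := by
        gcongr
        exact hkH_jensen N hst ha ha1 ((hHm.add_const 1).const_mul D) x
      _ = L * w ^ a := by
        congr 2
        have e1 : hkH N (t - s) (fun y => (D * (hkH N s F y + 1))) x =
            D * (hkH N (t - s) (fun y => hkH N s F y) x + ∫⁻ y, hkG N (t - s) (x - y)) := by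
          unfold hkH at hHm ⊢
          rw [← lintegral_add_right _ hGm, ← lintegral_const_mul' _ _ hDt]
          exact lintegral_congr fun y => by ring
        rw [e1, hkG_lint N hst, hkH_semigroup N hst hs0 hF, sub_add_cancel]
      _ ≤ ((2 * D) ^ m * (M s ^ m + 1)) * w ^ a := by gcongr
      _ = _ := by ring
  have part3 : ∫⁻ s in Set.Ioo 0 t, hkH N (t - s) (fun y => ((D * (hkH N s F y + 1)) ^ b) ^ p) x
      ≤ 2⁻¹ * w ^ a := by
    have hne : w ^ a * (2 * D) ^ m ≠ ⊤ :=
      ENNReal.mul_ne_top (ENNReal.rpow_ne_top_of_nonneg ha.le hwt)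
        (ENNReal.rpow_ne_top_of_nonneg hm.le (by finiteness))
    calc _ ≤ ∫⁻ s in Set.Ioo 0 t, (w ^ a * (2 * D) ^ m) * (M s ^ m + 1) :=
          setLIntegral_mono' measurableSet_Ioo part2
      _ = (w ^ a * (2 * D) ^ m) * ∫⁻ s in Set.Ioo 0 t, (M s ^ m + 1) :=
          lintegral_const_mul' _ _ hne
      _ ≤ (w ^ a * (2 * D) ^ m) * c := by gcongr
      _ = w ^ a * ((2 * D) ^ m * c) := by ring
      _ ≤ w ^ a * 2⁻¹ := by gcongr
      _ = _ := mul_comm _ _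
  calc hkD N f p (fun y s => (D * (hkH N s F y + 1)) ^ b) x t
      ≤ 2⁻¹ * w ^ a + 2⁻¹ * w ^ a := add_le_add part1 part3
    _ = w ^ a := by rw [← add_mul, ENNReal.inv_two_add_inv_two, one_mul]

/-- Theorem 3.1 (iii), first part: if `max{P,Q} > 0` there are
`γ₃, T₂, C > 0` such that `∫₀^T ‖S(s)W₀‖_∞^{max{P,Q}/N} ds ≤ γ₃` for some `T > 0` implies
the existence of a solution of (S) on `ℝ^N × (0, min{T,T₂}]` with
`0 ≤ u^{r₁} + v^{r₂} ≤ C S(t)W₀ + C`. -/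
theorem statement10 (N : ℕ) (hN : 1 ≤ N) (p q r₁ r₂ : ℝ) (hp : 0 ≤ p) (hq : 0 ≤ q)
    (hr₁ : 1 ≤ r₁) (hr₂ : 1 ≤ r₂) (P Q : ℝ)
    (hP : P = (N : ℝ) * (p / r₂ - 1 / r₁)) (hQ : Q = (N : ℝ) * (q / r₁ - 1 / r₂))
    (hPQpos : 0 < max P Q) :
    ∃ γ₃ T₂ C : ℝ, 0 < γ₃ ∧ 0 < T₂ ∧ 0 < C ∧
      ∀ u₀ v₀ : Euc N → ℝ, Measurable u₀ → Measurable v₀ →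
        (∀ x, 0 ≤ u₀ x) → (∀ x, 0 ≤ v₀ x) →
        (∀ t : ℝ, 0 < t → heatSup N t (fun y => u₀ y ^ r₁ + v₀ y ^ r₂) < ⊤) →
        ∀ T : ℝ, 0 < T →
          (∫⁻ s in Set.Ioo 0 T,
              heatSup N s (fun y => u₀ y ^ r₁ + v₀ y ^ r₂) ^ (max P Q / (N : ℝ))) ≤
            ENNReal.ofReal γ₃ →
          ∃ u v : Euc N → ℝ → ℝ,
            (∀ x t, 0 ≤ u x t) ∧ (∀ x t, 0 ≤ v x t) ∧
            Measurable (Function.uncurry u) ∧ Measurable (Function.uncurry v) ∧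
            ∀ t : ℝ, 0 < t → t ≤ min T T₂ →
              DuhamelSys N p q u₀ v₀ u v t ∧
              ∀ᵐ x ∂(volume : Measure (Euc N)),
                ENNReal.ofReal (u x t ^ r₁ + v x t ^ r₂) ≤
                  ENNReal.ofReal C * heatS N t (fun y => u₀ y ^ r₁ + v₀ y ^ r₂) x +
                    ENNReal.ofReal C := by
  have hr₁0 : 0 < r₁ := by linarith
  have hr₂0 : 0 < r₂ := by linarith
  have hN0 : (0 : ℝ) < N := by exact_mod_cast hN
  set m : ℝ := max P Q / (N : ℝ) with hm
  have hm0 : 0 < m := div_pos hPQpos hN0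
  have hPm : 1 / r₂ * p - 1 / r₁ ≤ m := by
    rw [hm, le_div_iff₀ hN0]
    refine le_trans (le_of_eq ?_) (le_max_left P Q)
    rw [hP]; ring
  have hQm : 1 / r₁ * q - 1 / r₂ ≤ m := by
    rw [hm, le_div_iff₀ hN0]
    refine le_trans (le_of_eq ?_) (le_max_right P Q)
    rw [hQ]; ring
  set d : ℝ := 2 ^ max r₁ r₂ with hd
  have hd1 : 1 ≤ d := Real.one_le_rpow (by norm_num) (hr₁0.le.trans (le_max_left _ _))
  have hd0 : 0 < d := by linarith
  have hda : ∀ r : ℝ, 0 < r → r ≤ max r₁ r₂ → 2 ≤ ENNReal.ofReal d ^ (1 / r) := by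
    intro r hr hrm
    rw [ENNReal.ofReal_rpow_of_pos hd0, hd, ← Real.rpow_mul (by norm_num)]
    have : (2 : ℝ) ≤ 2 ^ (max r₁ r₂ * (1 / r)) := by
      calc (2 : ℝ) = 2 ^ (1 : ℝ) := by simp
        _ ≤ _ := by
          apply Real.rpow_le_rpow_of_exponent_le (by norm_num)
          rw [mul_one_div, le_div_iff₀ hr]
          linarith
    calc (2 : ℝ≥0∞) = ENNReal.ofReal 2 := by simp
      _ ≤ _ := ENNReal.ofReal_le_ofReal this
  set γ : ℝ := ((2 * d) ^ m)⁻¹ / 4 with hγ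
  have hγ0 : 0 < γ := by positivity
  refine ⟨γ, γ, 2 * d, hγ0, hγ0, by positivity, ?_⟩
  intro u₀ v₀ hu₀m hv₀m hu₀ hv₀ hfin T hT hint
  set D : ℝ≥0∞ := ENNReal.ofReal d with hD
  have hD1 : 1 ≤ D := by rw [hD]; simpa using hd1
  have hDt : D ≠ ⊤ := ENNReal.ofReal_ne_top
  have hW0 : ∀ y, 0 ≤ u₀ y ^ r₁ + v₀ y ^ r₂ := fun y =>
    add_nonneg (Real.rpow_nonneg (hu₀ y) _) (Real.rpow_nonneg (hv₀ y) _)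
  set f : Euc N → ℝ≥0∞ := fun y => ENNReal.ofReal (u₀ y) with hf
  set g : Euc N → ℝ≥0∞ := fun y => ENNReal.ofReal (v₀ y) with hg
  set F : Euc N → ℝ≥0∞ := fun y => ENNReal.ofReal (u₀ y ^ r₁ + v₀ y ^ r₂) with hFdef
  have hfm : Measurable f := hu₀m.ennreal_ofReal
  have hgm : Measurable g := hv₀m.ennreal_ofReal
  have hFm : Measurable F := ((hu₀m.pow_const r₁).add (hv₀m.pow_const r₂)).ennreal_ofReal
  have hSF : ∀ t x, heatS N t (fun y => u₀ y ^ r₁ + v₀ y ^ r₂) x = hkH N t F x :=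
    fun t x => heatS_eq N t _ hW0 x
  have hfF : ∀ y, f y ≤ F y ^ (1 / r₁) := by
    intro y
    rw [hf, hFdef]
    simp only
    rw [ENNReal.ofReal_rpow_of_nonneg (hW0 y) (by positivity)]
    apply ENNReal.ofReal_le_ofReal
    calc u₀ y = (u₀ y ^ r₁) ^ (1 / r₁) := by
          rw [← Real.rpow_mul (hu₀ y), mul_one_div_cancel hr₁0.ne', Real.rpow_one]
      _ ≤ _ := Real.rpow_le_rpow (Real.rpow_nonneg (hu₀ y) _)
          (le_add_of_nonneg_right (Real.rpow_nonneg (hv₀ y) _)) (by positivity)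
  have hgF : ∀ y, g y ≤ F y ^ (1 / r₂) := by
    intro y
    rw [hg, hFdef]
    simp only
    rw [ENNReal.ofReal_rpow_of_nonneg (hW0 y) (by positivity)]
    apply ENNReal.ofReal_le_ofReal
    calc v₀ y = (v₀ y ^ r₂) ^ (1 / r₂) := by
          rw [← Real.rpow_mul (hv₀ y), mul_one_div_cancel hr₂0.ne', Real.rpow_one]
      _ ≤ _ := Real.rpow_le_rpow (Real.rpow_nonneg (hv₀ y) _)
          (le_add_of_nonneg_left (Real.rpow_nonneg (hu₀ y) _)) (by positivity)
  set M : ℝ → ℝ≥0∞ := fun s => heatSup N s (fun y => u₀ y ^ r₁ + v₀ y ^ r₂) with hM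
  have hMae : ∀ s, 0 < s → ∀ᵐ y, hkH N s F y ≤ M s := by
    intro s _
    have : ∀ᵐ y, heatS N s (fun y => u₀ y ^ r₁ + v₀ y ^ r₂) y ≤ M s :=
      ENNReal.ae_le_essSup _
    filter_upwards [this] with y hy
    rwa [hSF] at hy
  have hintt : ∀ t, 0 < t → t ≤ min T γ →
      ∫⁻ s in Set.Ioo 0 t, (M s ^ m + 1) ≤ ENNReal.ofReal (γ + γ) := by
    intro t ht htle
    rw [lintegral_add_right _ measurable_const, ENNReal.ofReal_add hγ0.le hγ0.le]
    refine add_le_add ?_ ?_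
    · refine le_trans (lintegral_mono_set ?_) hint
      exact Set.Ioo_subset_Ioo_right (htle.trans (min_le_left _ _))
    · simp only [lintegral_const, Measure.restrict_apply MeasurableSet.univ, Set.univ_inter,
        Real.volume_Ioo, one_mul, sub_zero]
      exact ENNReal.ofReal_le_ofReal (htle.trans (min_le_right _ _))
  have hc : (2 * D) ^ m * ENNReal.ofReal (γ + γ) ≤ 2⁻¹ := by
    have e1 : (2 * D) = ENNReal.ofReal (2 * d) := by
      rw [ENNReal.ofReal_mul (by norm_num)]; simp [hD]
    rw [e1, ENNReal.ofReal_rpow_of_pos (by positivity), ← ENNReal.ofReal_mul (by positivity)]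
    have e2 : (2 * d) ^ m * (γ + γ) = 2⁻¹ := by
      rw [hγ]
      have : (2 * d) ^ m ≠ 0 := by positivity
      field_simp
      norm_num
    rw [e2, ENNReal.ofReal_inv_of_pos (by norm_num)]
    simp
  set w : Euc N → ℝ → ℝ≥0∞ := fun x t => D * (hkH N t F x + 1) with hw
  have hbound : ∀ n, ∀ t, 0 < t → t ≤ min T γ → ∀ x,
      (hkIt N p q f g n).1 x t ≤ w x t ^ (1 / r₁) ∧
        (hkIt N p q f g n).2 x t ≤ w x t ^ (1 / r₂) := by
    intro n
    induction n with
    | zero => exact fun t _ _ x => ⟨zero_le, zero_le⟩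
    | succ n ih =>
      intro t ht htle x
      constructor
      · refine (hkD_mono N f hp x t (V' := fun y s => w y s ^ (1 / r₂))
          fun s hs0 hst y => (ih s hs0 (hst.le.trans htle) y).2).trans ?_
        exact hkD_super N f F hFm hfm p (1 / r₁) m (1 / r₂) hp (by positivity)
          (by rw [div_le_one hr₁0]; exact hr₁) hm0 hPm D _ hD1 hDt
          (hda r₁ hr₁0 (le_max_left _ _)) hfF M hMae hfin t ht (hintt t ht htle) hc x
      · refine (hkD_mono N g hq x t (V' := fun y s => w y s ^ (1 / r₁))
          fun s hs0 hst y => (ih s hs0 (hst.le.trans htle) y).1).trans ?_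
        exact hkD_super N g F hFm hgm q (1 / r₂) m (1 / r₁) hq (by positivity)
          (by rw [div_le_one hr₂0]; exact hr₂) hm0 hQm D _ hD1 hDt
          (hda r₂ hr₂0 (le_max_right _ _)) hgF M hMae hfin t ht (hintt t ht htle) hc x
  set U : Euc N → ℝ → ℝ≥0∞ := fun x t => ⨆ n, (hkIt N p q f g n).1 x t with hU
  set V : Euc N → ℝ → ℝ≥0∞ := fun x t => ⨆ n, (hkIt N p q f g n).2 x t with hV
  have hmono1 : ∀ x t, Monotone fun n => (hkIt N p q f g n).1 x t := fun x t =>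
    monotone_nat_of_le_succ fun n => (hkIt_step N hp hq f g n x t).1
  have hmono2 : ∀ x t, Monotone fun n => (hkIt N p q f g n).2 x t := fun x t =>
    monotone_nat_of_le_succ fun n => (hkIt_step N hp hq f g n x t).2
  have hUeq : ∀ x t, U x t = hkD N f p V x t := by
    intro x t
    rw [hV, hkD_iSup N f hp _ (fun n => (hkIt_meas N p q hfm hgm n).2) hmono2, hU]
    exact ((hmono1 x t).iSup_nat_add 1).symm
  have hVeq : ∀ x t, V x t = hkD N g q U x t := by
    intro x t
    rw [hU, hkD_iSup N g hq _ (fun n => (hkIt_meas N p q hfm hgm n).1) hmono1, hV]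
    exact ((hmono2 x t).iSup_nat_add 1).symm
  have hUm : Measurable (Function.uncurry U) :=
    Measurable.iSup fun n => (hkIt_meas N p q hfm hgm n).1
  have hVm : Measurable (Function.uncurry V) :=
    Measurable.iSup fun n => (hkIt_meas N p q hfm hgm n).2
  have hUle : ∀ t, 0 < t → t ≤ min T γ → ∀ x, U x t ≤ w x t ^ (1 / r₁) :=
    fun t ht htle x => iSup_le fun n => (hbound n t ht htle x).1
  have hVle : ∀ t, 0 < t → t ≤ min T γ → ∀ x, V x t ≤ w x t ^ (1 / r₂) :=
    fun t ht htle x => iSup_le fun n => (hbound n t ht htle x).2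
  have hwfin : ∀ t, 0 < t → ∀ᵐ x, w x t ≠ ⊤ := by
    intro t ht
    filter_upwards [hMae t ht] with x hx
    have h1 : hkH N t F x ≠ ⊤ := (hx.trans_lt (hfin t ht)).ne
    exact ENNReal.mul_ne_top hDt (ENNReal.add_ne_top.2 ⟨h1, ENNReal.one_ne_top⟩)
  have hUfin : ∀ t, 0 < t → t ≤ min T γ → ∀ᵐ x, U x t ≠ ⊤ := by
    intro t ht htle
    filter_upwards [hwfin t ht] with x hx
    exact ((hUle t ht htle x).trans_lt
      (ENNReal.rpow_ne_top_of_nonneg (by positivity) hx).lt_top).ne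
  have hVfin : ∀ t, 0 < t → t ≤ min T γ → ∀ᵐ x, V x t ≠ ⊤ := by
    intro t ht htle
    filter_upwards [hwfin t ht] with x hx
    exact ((hVle t ht htle x).trans_lt
      (ENNReal.rpow_ne_top_of_nonneg (by positivity) hx).lt_top).ne
  have hconv : ∀ (Z : Euc N → ℝ → ℝ≥0∞) (k : ℝ), 0 ≤ k →
      (∀ t, 0 < t → t ≤ min T γ → ∀ᵐ x, Z x t ≠ ⊤) →
      ∀ t, 0 < t → t ≤ min T γ → ∀ x,
        ∫⁻ s in Set.Ioo 0 t, heatS N (t - s) (fun y => (Z y s).toReal ^ k) x =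
          ∫⁻ s in Set.Ioo 0 t, hkH N (t - s) (fun y => Z y s ^ k) x := by
    intro Z k hk hZ t ht htle x
    refine setLIntegral_congr_fun measurableSet_Ioo fun s hs => ?_
    rw [heatS_eq N _ _ (fun y => Real.rpow_nonneg ENNReal.toReal_nonneg _)]
    refine hkH_congr_ae N _ ?_ x
    filter_upwards [hZ s hs.1 (hs.2.le.trans htle)] with y hy
    rw [← ENNReal.ofReal_rpow_of_nonneg ENNReal.toReal_nonneg hk, ENNReal.ofReal_toReal hy]
  refine ⟨fun x t => (U x t).toReal, fun x t => (V x t).toReal,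
    fun x t => ENNReal.toReal_nonneg, fun x t => ENNReal.toReal_nonneg,
    hUm.ennreal_toReal, hVm.ennreal_toReal, ?_⟩
  intro t ht htle
  refine ⟨⟨?_, ?_⟩, ?_⟩
  · filter_upwards [hUfin t ht htle] with x hx
    rw [ENNReal.ofReal_toReal hx, hconv V p hp hVfin t ht htle x, heatS_eq N t u₀ hu₀ x]
    exact hUeq x t
  · filter_upwards [hVfin t ht htle] with x hx
    rw [ENNReal.ofReal_toReal hx, hconv U q hq hUfin t ht htle x, heatS_eq N t v₀ hv₀ x]
    exact hVeq x t
  · filter_upwards [hUfin t ht htle, hVfin t ht htle] with x hxU hxV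
    rw [ENNReal.ofReal_add (Real.rpow_nonneg ENNReal.toReal_nonneg _)
      (Real.rpow_nonneg ENNReal.toReal_nonneg _),
      ← ENNReal.ofReal_rpow_of_nonneg ENNReal.toReal_nonneg hr₁0.le,
      ← ENNReal.ofReal_rpow_of_nonneg ENNReal.toReal_nonneg hr₂0.le,
      ENNReal.ofReal_toReal hxU, ENNReal.ofReal_toReal hxV, hSF]
    have h1 : U x t ^ r₁ ≤ w x t := by
      calc U x t ^ r₁ ≤ (w x t ^ (1 / r₁)) ^ r₁ :=
            ENNReal.rpow_le_rpow (hUle t ht htle x) hr₁0.le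
        _ = w x t := by
          rw [← ENNReal.rpow_mul, one_div_mul_cancel hr₁0.ne', ENNReal.rpow_one]
    have h2 : V x t ^ r₂ ≤ w x t := by
      calc V x t ^ r₂ ≤ (w x t ^ (1 / r₂)) ^ r₂ :=
            ENNReal.rpow_le_rpow (hVle t ht htle x) hr₂0.le
        _ = w x t := by
          rw [← ENNReal.rpow_mul, one_div_mul_cancel hr₂0.ne', ENNReal.rpow_one]
    have e1 : ENNReal.ofReal (2 * d) = 2 * D := by
      rw [ENNReal.ofReal_mul (by norm_num)]; simp [hD]
    calc U x t ^ r₁ + V x t ^ r₂ ≤ w x t + w x t := add_le_add h1 h2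
      _ = ENNReal.ofReal (2 * d) * hkH N t F x + ENNReal.ofReal (2 * d) := by
        rw [e1, hw]
        ring
end
end

section
/- Let N ≥ 1 and p, q ≥ 0 with pq > 1, and assume r₁* := (N/2)(pq−1)/(p+1) > 1 and r₂* := (N/2)(pq−1)/(q+1) > 1. Then there exists δ > 0 such that for all nonnegative measurable functions u₀, v₀ on ℝ^N with ‖u₀‖_{L^{r₁*,∞}(ℝ^N)} + ‖v₀‖_{L^{r₂*,∞}(ℝ^N)} < δ, the system (S) possesses a global-in-time solution (u,v) on ℝ^N × (0,∞); moreover there exist constants C > 0 and σ, r with 1 < σ ≤ r ≤ min{r₁*, r₂*} such that 0 ≤ u(x,t)^{r₁*} + v(x,t)^{r₂*} ≤ C [S(t)(u₀^{r₁*} + v₀^{r₂*})^{σ/r}](x)^{r/σ} for a.e. x ∈ ℝ^N and all t > 0. -/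
open MeasureTheory ENNReal Filter

noncomputable section

/-- The heat kernel with values in `[0,∞]`. -/
def hk (N : ℕ) (t : ℝ) (x : Euc N) : ℝ≥0∞ :=
  ENNReal.ofReal ((4 * Real.pi * t) ^ (-(N : ℝ) / 2) * Real.exp (-‖x‖ ^ 2 / (4 * t)))

/-- The heat semigroup acting on `[0,∞]`-valued functions. -/
def hs (N : ℕ) (t : ℝ) (f : Euc N → ℝ≥0∞) (x : Euc N) : ℝ≥0∞ :=
  ∫⁻ y, hk N t (x - y) * f y

lemma heatS_eq_hs (N : ℕ) {t : ℝ} (ht : 0 < t) (φ : Euc N → ℝ) (x : Euc N) :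
    heatS N t φ x = hs N t (fun y => ENNReal.ofReal (φ y)) x := by
  unfold heatS hs hk
  refine lintegral_congr fun y => ?_
  rw [ENNReal.ofReal_mul (by positivity)]

lemma measurable_hk_uncurry (N : ℕ) : Measurable (fun z : ℝ × Euc N => hk N z.1 z.2) := by
  unfold hk
  fun_prop

lemma measurable_hk (N : ℕ) (t : ℝ) : Measurable (hk N t) := by
  unfold hk
  fun_prop

lemma lintegral_gauss (N : ℕ) {b : ℝ} (hb : 0 < b) (m : Euc N) :
    ∫⁻ y : Euc N, ENNReal.ofReal (Real.exp (-b * ‖y - m‖ ^ 2)) =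
      ENNReal.ofReal ((Real.pi / b) ^ ((N : ℝ) / 2)) := by
  rw [lintegral_sub_right_eq_self (fun y : Euc N => ENNReal.ofReal (Real.exp (-b * ‖y‖ ^ 2))) m]
  have h := GaussianFourier.integral_rexp_neg_mul_sq_norm (V := Euc N) hb
  rw [finrank_euclideanSpace_fin] at h
  rw [← h, ofReal_integral_eq_lintegral_ofReal]
  · by_contra hc
    rw [integral_undef hc] at h
    have : 0 < (Real.pi / b) ^ ((N : ℝ) / 2) := by positivity
    linarith
  · exact Filter.Eventually.of_forall fun y => (Real.exp_pos _).le

lemma lintegral_hk (N : ℕ) {t : ℝ} (ht : 0 < t) (x : Euc N) :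
    ∫⁻ y, hk N t (x - y) = 1 := by
  have h1 : ∀ y, hk N t (x - y) = ENNReal.ofReal ((4 * Real.pi * t) ^ (-(N : ℝ) / 2)) *
      ENNReal.ofReal (Real.exp (-(1 / (4 * t)) * ‖y - x‖ ^ 2)) := by
    intro y
    unfold hk
    rw [ENNReal.ofReal_mul (by positivity), norm_sub_rev]
    congr 3
    field_simp
  simp_rw [h1]
  rw [lintegral_const_mul _ (by fun_prop), lintegral_gauss N (by positivity),
    ← ENNReal.ofReal_mul (by positivity)]
  have : Real.pi / (1 / (4 * t)) = 4 * Real.pi * t := by field_simp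
  rw [this, ← Real.rpow_add (by positivity)]
  simp [neg_div]

lemma hk_conv (N : ℕ) {a b : ℝ} (ha : 0 < a) (hb : 0 < b) (x y : Euc N) :
    ∫⁻ z, hk N a (x - z) * hk N b (z - y) = hk N (a + b) (x - y) := by
  have hab : 0 < a + b := by positivity
  set m : Euc N := (b / (a + b)) • x + (a / (a + b)) • y with hm
  have key : ∀ z : Euc N, -‖x - z‖ ^ 2 / (4 * a) + -‖z - y‖ ^ 2 / (4 * b) =
      -‖x - y‖ ^ 2 / (4 * (a + b)) + -((a + b) / (4 * a * b)) * ‖z - m‖ ^ 2 := by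
    intro z
    have e1 : z - m = (a / (a + b)) • (z - y) - (b / (a + b)) • (x - z) := by
      have : z = (a / (a + b)) • z + (b / (a + b)) • z := by
        rw [← add_smul, ← add_div, div_self hab.ne', one_smul]
      rw [hm]
      nth_rewrite 1 [this]
      simp only [smul_sub]
      abel
    have e2 : x - y = (x - z) + (z - y) := by abel
    rw [e1, e2]
    generalize x - z = X
    generalize z - y = Y
    rw [@norm_add_sq_real, @norm_sub_sq_real, norm_smul, norm_smul, inner_smul_left,
      inner_smul_right, real_inner_comm X Y]
    rw [Real.norm_of_nonneg (by positivity), Real.norm_of_nonneg (by positivity)]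
    simp only [conj_trivial]
    field_simp
    ring
  have h1 : ∀ z, hk N a (x - z) * hk N b (z - y) =
      ENNReal.ofReal ((4 * Real.pi * a) ^ (-(N : ℝ) / 2) * (4 * Real.pi * b) ^ (-(N : ℝ) / 2) *
        Real.exp (-‖x - y‖ ^ 2 / (4 * (a + b)))) *
      ENNReal.ofReal (Real.exp (-((a + b) / (4 * a * b)) * ‖z - m‖ ^ 2)) := by
    intro z
    unfold hk
    rw [← ENNReal.ofReal_mul (by positivity), ← ENNReal.ofReal_mul (by positivity)]
    congr 1
    rw [mul_assoc ((4 * Real.pi * a) ^ (-(N : ℝ) / 2) * (4 * Real.pi * b) ^ (-(N : ℝ) / 2)),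
      ← Real.exp_add, ← key z, Real.exp_add]
    ring
  simp_rw [h1]
  rw [lintegral_const_mul _ (by fun_prop), lintegral_gauss N (by positivity),
    ← ENNReal.ofReal_mul (by positivity)]
  unfold hk
  congr 1
  have e3 : Real.pi / ((a + b) / (4 * a * b)) =
      (4 * Real.pi * a) * (4 * Real.pi * b) / (4 * Real.pi * (a + b)) := by
    field_simp
  have q1 : 0 < 4 * Real.pi * a := by positivity
  have q2 : 0 < 4 * Real.pi * b := by positivity
  have q3 : 0 < 4 * Real.pi * (a + b) := by positivity
  rw [e3, Real.div_rpow (mul_pos q1 q2).le q3.le, Real.mul_rpow q1.le q2.le]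
  rw [neg_div, Real.rpow_neg q1.le, Real.rpow_neg q2.le, Real.rpow_neg q3.le]
  have p1 : (4 * Real.pi * a) ^ ((N : ℝ) / 2) ≠ 0 := by positivity
  have p2 : (4 * Real.pi * b) ^ ((N : ℝ) / 2) ≠ 0 := by positivity
  generalize (4 * Real.pi * a) ^ ((N : ℝ) / 2) = P1 at *
  generalize (4 * Real.pi * b) ^ ((N : ℝ) / 2) = P2 at *
  field_simp

lemma measurable_hs (N : ℕ) (t : ℝ) {f : Euc N → ℝ≥0∞} (hf : Measurable f) :
    Measurable (hs N t f) := by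
  unfold hs
  refine Measurable.lintegral_prod_right ?_
  have := measurable_hk N t
  simp only [Function.uncurry_def]
  fun_prop

lemma hs_semigroup (N : ℕ) {a b : ℝ} (ha : 0 < a) (hb : 0 < b) {f : Euc N → ℝ≥0∞}
    (hf : Measurable f) (x : Euc N) : hs N a (hs N b f) x = hs N (a + b) f x := by
  have hma := measurable_hk N a
  have hmb := measurable_hk N b
  unfold hs
  have h1 : ∀ z, hk N a (x - z) * ∫⁻ y, hk N b (z - y) * f y =
      ∫⁻ y, hk N a (x - z) * (hk N b (z - y) * f y) := fun z =>
    (lintegral_const_mul _ (by fun_prop)).symm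
  simp_rw [h1]
  rw [lintegral_lintegral_swap (by simp only [Function.uncurry_def]; fun_prop)]
  refine lintegral_congr fun y => ?_
  simp_rw [← mul_assoc]
  rw [lintegral_mul_const _ (by fun_prop), hk_conv N ha hb]

lemma hs_mono (N : ℕ) (t : ℝ) {f g : Euc N → ℝ≥0∞} (h : ∀ y, f y ≤ g y) (x : Euc N) :
    hs N t f x ≤ hs N t g x :=
  lintegral_mono fun y => by gcongr; exact h y

lemma hs_const_mul (N : ℕ) (t : ℝ) (c : ℝ≥0∞) {f : Euc N → ℝ≥0∞} (hf : Measurable f)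
    (x : Euc N) : hs N t (fun y => c * f y) x = c * hs N t f x := by
  have hma := measurable_hk N t
  unfold hs
  rw [← lintegral_const_mul _ (by fun_prop)]
  refine lintegral_congr fun y => ?_
  ring

lemma hs_eq_withDensity (N : ℕ) (t : ℝ) {f : Euc N → ℝ≥0∞} (hf : Measurable f) (x : Euc N) :
    hs N t f x = ∫⁻ y, f y ∂(volume.withDensity fun y => hk N t (x - y)) := by
  have hma := measurable_hk N t
  rw [lintegral_withDensity_eq_lintegral_mul _ (by fun_prop) hf]
  rfl

lemma hk_isProb (N : ℕ) {t : ℝ} (ht : 0 < t) (x : Euc N) :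
    IsProbabilityMeasure ((volume : Measure (Euc N)).withDensity fun y => hk N t (x - y)) := by
  constructor
  rw [withDensity_apply _ MeasurableSet.univ, Measure.restrict_univ, lintegral_hk N ht]

lemma hs_jensen (N : ℕ) {t : ℝ} (ht : 0 < t) {f : Euc N → ℝ≥0∞} (hf : Measurable f)
    {e : ℝ} (he : 0 < e) (he1 : e ≤ 1) (x : Euc N) :
    hs N t (fun y => f y ^ e) x ≤ hs N t f x ^ e := by
  rw [hs_eq_withDensity N t (by fun_prop), hs_eq_withDensity N t hf]
  have := hk_isProb N ht x
  have h := eLpNorm'_le_eLpNorm'_of_exponent_le (f := f) he he1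
    ((volume : Measure (Euc N)).withDensity fun y => hk N t (x - y))
    hf.aestronglyMeasurable
  unfold eLpNorm' at h
  simp only [enorm_eq_self, ENNReal.rpow_one, div_one] at h
  have h2 := ENNReal.rpow_le_rpow h he.le
  rwa [← ENNReal.rpow_mul, one_div_mul_cancel he.ne', ENNReal.rpow_one] at h2

lemma hs_weak_bound (N : ℕ) {t : ℝ} (ht : 0 < t) {w : Euc N → ℝ} (hw : Measurable w)
    (hw0 : ∀ y, 0 ≤ w y) {θ κ : ℝ} (hθ : 0 < θ) (hθ1 : θ < 1) (hκ : 0 < κ)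
    (hdist : ∀ l : ℝ, 0 < l → volume {y | l < w y} ≤ ENNReal.ofReal (κ / l)) (x : Euc N) :
    hs N t (fun y => ENNReal.ofReal (w y ^ θ)) x ≤
      ENNReal.ofReal (((4 * Real.pi * t) ^ (-(N : ℝ) / 2) * κ) ^ θ / (1 - θ)) := by
  rw [hs_eq_withDensity N t (by fun_prop)]
  have hprob := hk_isProb N ht x
  have hma := measurable_hk N t
  set μ := (volume : Measure (Euc N)).withDensity fun y => hk N t (x - y) with hμ
  set A := (4 * Real.pi * t) ^ (-(N : ℝ) / 2) * κ with hA
  have hA0 : 0 < A := by positivity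
  rw [lintegral_rpow_eq_lintegral_meas_lt_mul μ (Filter.Eventually.of_forall hw0)
    hw.aemeasurable hθ]
  have hb : ∀ l : ℝ, 0 < l → μ {y | l < w y} ≤ ENNReal.ofReal (A / l) := by
    intro l hl
    rw [hμ, withDensity_apply _ (measurableSet_lt measurable_const hw)]
    calc ∫⁻ y in {y | l < w y}, hk N t (x - y)
        ≤ ∫⁻ y in {y | l < w y}, ENNReal.ofReal ((4 * Real.pi * t) ^ (-(N : ℝ) / 2)) := by
          refine lintegral_mono fun y => ?_
          unfold hk
          refine ENNReal.ofReal_le_ofReal ?_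
          refine mul_le_of_le_one_right (by positivity) ?_
          rw [Real.exp_le_one_iff]
          rw [neg_div]
          have : 0 ≤ ‖x - y‖ ^ 2 / (4 * t) := by positivity
          linarith
      _ = ENNReal.ofReal ((4 * Real.pi * t) ^ (-(N : ℝ) / 2)) * volume {y | l < w y} := by
          rw [lintegral_const, Measure.restrict_apply_univ]
      _ ≤ ENNReal.ofReal ((4 * Real.pi * t) ^ (-(N : ℝ) / 2)) * ENNReal.ofReal (κ / l) := by
          gcongr
          exact hdist l hl
      _ = ENNReal.ofReal (A / l) := by
          rw [← ENNReal.ofReal_mul (by positivity), hA, mul_div_assoc]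
  rw [← Set.Ioc_union_Ioi_eq_Ioi hA0.le]
  have i1 : ∫⁻ l in Set.Ioc 0 A, μ {y | l < w y} * ENNReal.ofReal (l ^ (θ - 1)) ≤
      ENNReal.ofReal (A ^ θ / θ) := by
    calc _ ≤ ∫⁻ l in Set.Ioc 0 A, ENNReal.ofReal (l ^ (θ - 1)) := by
          refine lintegral_mono fun l => ?_
          exact mul_le_of_le_one_left' prob_le_one
      _ = ENNReal.ofReal (∫ l in Set.Ioc 0 A, l ^ (θ - 1)) := by
          rw [ofReal_integral_eq_lintegral_ofReal]
          · exact (intervalIntegrable_iff_integrableOn_Ioc_of_le hA0.le).1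
              (intervalIntegral.intervalIntegrable_rpow' (by linarith))
          · exact (ae_restrict_iff' measurableSet_Ioc).2
              (Filter.Eventually.of_forall fun l hl => Real.rpow_nonneg hl.1.le _)
      _ = _ := by
          rw [← intervalIntegral.integral_of_le hA0.le, integral_rpow (Or.inl (by linarith))]
          simp [hθ.ne']
  have i2 : ∫⁻ l in Set.Ioi A, μ {y | l < w y} * ENNReal.ofReal (l ^ (θ - 1)) ≤
      ENNReal.ofReal (A ^ θ / (1 - θ)) := by
    calc _ ≤ ∫⁻ l in Set.Ioi A, ENNReal.ofReal (A * l ^ (θ - 2)) := by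
          refine setLIntegral_mono (by fun_prop) fun l hl => ?_
          have hl0 : 0 < l := hA0.trans hl
          calc _ ≤ ENNReal.ofReal (A / l) * ENNReal.ofReal (l ^ (θ - 1)) := by
                gcongr
                exact hb l hl0
            _ = _ := by
                rw [← ENNReal.ofReal_mul (by positivity)]
                congr 1
                rw [show θ - 1 = (θ - 2) + 1 by ring, Real.rpow_add_one hl0.ne']
                field_simp
      _ = ENNReal.ofReal (∫ l in Set.Ioi A, A * l ^ (θ - 2)) := by
          rw [ofReal_integral_eq_lintegral_ofReal]
          · exact (integrableOn_Ioi_rpow_of_lt (by linarith) hA0).const_mul A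
          · exact (ae_restrict_iff' measurableSet_Ioi).2
              (Filter.Eventually.of_forall fun l hl =>
                mul_nonneg hA0.le (Real.rpow_nonneg (hA0.trans hl).le _))
      _ = _ := by
          rw [integral_const_mul, integral_Ioi_rpow_of_lt (by linarith) hA0]
          congr 1
          have : A ^ θ = A ^ (θ - 2 + 1) * A := by
            rw [← Real.rpow_add_one hA0.ne']
            congr 1; ring
          rw [this]
          have h1 : θ - 2 + 1 ≠ 0 := by linarith
          have h2 : 1 - θ ≠ 0 := by linarith
          have h3 : θ - 2 + 1 = -(1 - θ) := by ring
          rw [h3, neg_div_neg_eq]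
          ring
  calc _ ≤ ENNReal.ofReal θ * (ENNReal.ofReal (A ^ θ / θ) + ENNReal.ofReal (A ^ θ / (1 - θ))) := by
        gcongr
        exact (lintegral_union_le _ _ _).trans (add_le_add i1 i2)
    _ = _ := by
        have h2 : 0 < 1 - θ := by linarith
        rw [← ENNReal.ofReal_add (by positivity) (by positivity),
          ← ENNReal.ofReal_mul (by positivity)]
        congr 1
        field_simp
        ring

lemma duhamel_bound (N : ℕ) {z : Euc N → ℝ≥0∞} (hz : Measurable z) {m B : ℝ} (hm : 0 < m)
    (hB : 0 < B)
    (hbd : ∀ s : ℝ, 0 < s → ∀ x, hs N s z x ≤ ENNReal.ofReal (B * s ^ (-m)))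
    {a b e : ℝ} (ha : 0 < a) (hae : a < e) (he1 : e ≤ 1) (heb : e ≤ b) (hb : b = a + 1 / m)
    {t : ℝ} (ht : 0 < t) (x : Euc N) :
    ∫⁻ s in Set.Ioo 0 t, hs N (t - s) (fun y => hs N s z y ^ b) x ≤
      ENNReal.ofReal (B ^ (1 / m) / (m * (e - a))) * hs N t z x ^ a := by
  have he : 0 < e := ha.trans hae
  have hc : 0 < m * (e - a) := mul_pos hm (by linarith)
  have hexp : -m * (b - e) = m * (e - a) - 1 := by
    rw [hb]; field_simp; ring
  have step : ∀ s ∈ Set.Ioo 0 t, hs N (t - s) (fun y => hs N s z y ^ b) x ≤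
      ENNReal.ofReal (B ^ (b - e)) * hs N t z x ^ e * ENNReal.ofReal (s ^ (m * (e - a) - 1)) := by
    intro s hs'
    have hs0 : 0 < s := hs'.1
    have hts : 0 < t - s := by linarith [hs'.2]
    have hmz := measurable_hs N s hz
    calc hs N (t - s) (fun y => hs N s z y ^ b) x
        ≤ hs N (t - s) (fun y => ENNReal.ofReal ((B * s ^ (-m)) ^ (b - e)) * hs N s z y ^ e) x := by
          refine hs_mono N _ (fun y => ?_) x
          calc hs N s z y ^ b = hs N s z y ^ (b - e) * hs N s z y ^ e := by
                rw [← ENNReal.rpow_add_of_nonneg _ _ (by linarith) he.le]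
                congr 1; ring
            _ ≤ _ := by
                gcongr
                rw [← ENNReal.ofReal_rpow_of_nonneg (by positivity) (by linarith)]
                exact ENNReal.rpow_le_rpow (hbd s hs0 y) (by linarith)
      _ = ENNReal.ofReal ((B * s ^ (-m)) ^ (b - e)) * hs N (t - s) (fun y => hs N s z y ^ e) x :=
          hs_const_mul N _ _ (by fun_prop) x
      _ ≤ ENNReal.ofReal ((B * s ^ (-m)) ^ (b - e)) * hs N t z x ^ e := by
          gcongr
          refine (hs_jensen N hts hmz he he1 x).trans ?_
          rw [hs_semigroup N hts hs0 hz, sub_add_cancel]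
      _ = _ := by
          rw [Real.mul_rpow hB.le (by positivity), ← Real.rpow_mul hs0.le, hexp,
            ENNReal.ofReal_mul (by positivity)]
          ring
  calc _ ≤ ∫⁻ s in Set.Ioo 0 t, ENNReal.ofReal (B ^ (b - e)) * hs N t z x ^ e *
          ENNReal.ofReal (s ^ (m * (e - a) - 1)) :=
        setLIntegral_mono (by fun_prop) step
    _ = ENNReal.ofReal (B ^ (b - e)) * hs N t z x ^ e *
          ∫⁻ s in Set.Ioo 0 t, ENNReal.ofReal (s ^ (m * (e - a) - 1)) :=
        lintegral_const_mul _ (by fun_prop)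
    _ = ENNReal.ofReal (B ^ (b - e)) * hs N t z x ^ e *
          ENNReal.ofReal (t ^ (m * (e - a)) / (m * (e - a))) := by
        congr 1
        rw [← ofReal_integral_eq_lintegral_ofReal]
        · rw [← integral_Ioc_eq_integral_Ioo, ← intervalIntegral.integral_of_le ht.le,
            integral_rpow (Or.inl (by linarith))]
          simp [hc.ne']
        · exact ((intervalIntegrable_iff_integrableOn_Ioc_of_le ht.le).1
              (intervalIntegral.intervalIntegrable_rpow' (by linarith))).mono_set
              Set.Ioo_subset_Ioc_self
        · exact (ae_restrict_iff' measurableSet_Ioo).2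
              (Filter.Eventually.of_forall fun l hl => Real.rpow_nonneg hl.1.le _)
    _ ≤ ENNReal.ofReal (B ^ (b - e)) * (ENNReal.ofReal ((B * t ^ (-m)) ^ (e - a)) * hs N t z x ^ a) *
          ENNReal.ofReal (t ^ (m * (e - a)) / (m * (e - a))) := by
        gcongr
        calc hs N t z x ^ e = hs N t z x ^ (e - a) * hs N t z x ^ a := by
              rw [← ENNReal.rpow_add_of_nonneg _ _ (by linarith) ha.le]
              congr 1; ring
          _ ≤ _ := by
              gcongr
              rw [← ENNReal.ofReal_rpow_of_nonneg (by positivity) (by linarith)]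
              exact ENNReal.rpow_le_rpow (hbd t ht x) (by linarith)
    _ = ENNReal.ofReal (B ^ (b - e) * (B * t ^ (-m)) ^ (e - a) *
          (t ^ (m * (e - a)) / (m * (e - a)))) * hs N t z x ^ a := by
        rw [ENNReal.ofReal_mul (by positivity), ENNReal.ofReal_mul (by positivity)]
        ring
    _ = _ := by
        congr 2
        rw [Real.mul_rpow hB.le (by positivity), ← Real.rpow_mul ht.le]
        have e1 : B ^ (1 / m) = B ^ (b - e) * B ^ (e - a) := by
          rw [← Real.rpow_add hB]; congr 1; rw [hb]; ring
        have e2 : t ^ (-m * (e - a)) * t ^ (m * (e - a)) = 1 := by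
          rw [← Real.rpow_add ht]; simp
        rw [e1]
        calc _ = B ^ (b - e) * B ^ (e - a) * (t ^ (-m * (e - a)) * t ^ (m * (e - a))) /
              (m * (e - a)) := by ring
          _ = _ := by rw [e2, mul_one]

/-- The Duhamel map. -/
def duh (N : ℕ) (f₀ : Euc N → ℝ≥0∞) (p : ℝ) (g : Euc N → ℝ → ℝ≥0∞) (x : Euc N) (t : ℝ) : ℝ≥0∞ :=
  hs N t f₀ x + ∫⁻ s in Set.Ioo 0 t, hs N (t - s) (fun y => g y s ^ p) x

lemma measurable_hs_sub (N : ℕ) {g : Euc N → ℝ → ℝ≥0∞} (hg : Measurable (Function.uncurry g)) :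
    Measurable (fun w : (Euc N × ℝ) × ℝ => hs N (w.1.2 - w.2) (fun y => g y w.2) w.1.1) := by
  unfold hs
  refine Measurable.lintegral_prod_right
    (f := fun (w : (Euc N × ℝ) × ℝ) y => hk N (w.1.2 - w.2) (w.1.1 - y) * g y w.2) ?_
  simp only [Function.uncurry_def]
  refine Measurable.mul ?_ ?_
  · exact (measurable_hk_uncurry N).comp (f := fun a : ((Euc N × ℝ) × ℝ) × Euc N =>
      (a.1.1.2 - a.1.2, a.1.1.1 - a.2)) (by fun_prop)
  · exact hg.comp (f := fun a : ((Euc N × ℝ) × ℝ) × Euc N => (a.2, a.1.2)) (by fun_prop)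

lemma measurable_duh (N : ℕ) {f₀ : Euc N → ℝ≥0∞} (hf₀ : Measurable f₀) (p : ℝ)
    {g : Euc N → ℝ → ℝ≥0∞} (hg : Measurable (Function.uncurry g)) :
    Measurable (Function.uncurry (duh N f₀ p g)) := by
  unfold duh
  simp only [Function.uncurry_def]
  refine Measurable.add ?_ ?_
  · have h := measurable_hs_sub N (g := fun y _ => f₀ y)
      (hf₀.comp (f := fun a : Euc N × ℝ => a.1) measurable_fst)
    have h2 := h.comp (f := fun a : Euc N × ℝ => (a, (0 : ℝ))) (by fun_prop)
    simpa [Function.comp_def] using h2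
  · have h := measurable_hs_sub N (g := fun y s => g y s ^ p) (by
      have : Measurable (fun a : Euc N × ℝ => Function.uncurry g a ^ p) := by fun_prop
      exact this)
    have e : ∀ a : Euc N × ℝ, ∫⁻ s in Set.Ioo 0 a.2, hs N (a.2 - s) (fun y => g y s ^ p) a.1 =
        ∫⁻ s, Set.indicator {w : (Euc N × ℝ) × ℝ | 0 < w.2 ∧ w.2 < w.1.2}
          (fun w => hs N (w.1.2 - w.2) (fun y => g y w.2 ^ p) w.1.1) (a, s) := by
      intro a
      rw [← lintegral_indicator measurableSet_Ioo]
      refine lintegral_congr fun s => ?_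
      simp [Set.indicator_apply]
    simp_rw [e]
    refine Measurable.lintegral_prod_right' (h.indicator ?_)
    exact (measurableSet_lt measurable_const measurable_snd).inter
      (measurableSet_lt measurable_snd (by fun_prop))

lemma duh_mono (N : ℕ) (f₀ : Euc N → ℝ≥0∞) {p : ℝ} (hp : 0 ≤ p) {g g' : Euc N → ℝ → ℝ≥0∞}
    (x : Euc N) (t : ℝ) (h : ∀ y s, 0 < s → g y s ≤ g' y s) :
    duh N f₀ p g x t ≤ duh N f₀ p g' x t := by
  unfold duh
  refine add_le_add le_rfl ?_
  refine lintegral_mono_ae ((ae_restrict_iff' measurableSet_Ioo).2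
    (Filter.Eventually.of_forall fun s hs' => ?_))
  exact hs_mono N _ (fun y => ENNReal.rpow_le_rpow (h y s hs'.1) hp) x

lemma duh_iSup (N : ℕ) (f₀ : Euc N → ℝ≥0∞) {p : ℝ} (hp : 0 < p) {g : ℕ → Euc N → ℝ → ℝ≥0∞}
    (hg : ∀ n, Measurable (Function.uncurry (g n))) (hmono : Monotone g)
    (x : Euc N) (t : ℝ) :
    duh N f₀ p (fun y s => ⨆ n, g n y s) x t = ⨆ n, duh N f₀ p (g n) x t := by
  unfold duh
  rw [← ENNReal.add_iSup]
  congr 1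
  have hk' := measurable_hk N
  have hgp : ∀ n, Measurable (Function.uncurry fun y s => g n y s ^ p) := fun n => by
    have := hg n
    have : Measurable (fun a : Euc N × ℝ => Function.uncurry (g n) a ^ p) := by fun_prop
    exact this
  have h1 : ∀ s, hs N (t - s) (fun y => (⨆ n, g n y s) ^ p) x =
      ⨆ n, hs N (t - s) (fun y => g n y s ^ p) x := by
    intro s
    unfold hs
    rw [← lintegral_iSup]
    · refine lintegral_congr fun y => ?_
      rw [← ENNReal.mul_iSup]
      congr 1
      exact (ENNReal.orderIsoRpow p hp).map_iSup _
    · intro n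
      have h3 : Measurable fun y => g n y s ^ p :=
        (hgp n).comp (f := fun y => (y, s)) (by fun_prop)
      have := hk' (t - s)
      fun_prop
    · intro i j hij y
      have := hmono hij y s
      dsimp only
      gcongr
  simp_rw [h1]
  rw [lintegral_iSup]
  · intro n
    exact (measurable_hs_sub N (hgp n)).comp (f := fun s : ℝ => ((x, t), s)) (by fun_prop)
  · intro i j hij s
    exact hs_mono N _ (fun y => ENNReal.rpow_le_rpow (hmono hij y s) hp.le) x

/-- Monotone (Picard) iteration for the system. -/
def iter (N : ℕ) (p q : ℝ) (f₀ g₀ : Euc N → ℝ≥0∞) :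
    ℕ → (Euc N → ℝ → ℝ≥0∞) × (Euc N → ℝ → ℝ≥0∞)
  | 0 => (fun _ _ => 0, fun _ _ => 0)
  | n + 1 => (duh N f₀ p (iter N p q f₀ g₀ n).2, duh N g₀ q (iter N p q f₀ g₀ n).1)

lemma exists_fixed (N : ℕ) {p q : ℝ} (hp : 0 < p) (hq : 0 < q) {f₀ g₀ : Euc N → ℝ≥0∞}
    (hf₀ : Measurable f₀) (hg₀ : Measurable g₀) {U V : Euc N → ℝ → ℝ≥0∞}
    (hU : ∀ x t, 0 < t → duh N f₀ p V x t ≤ U x t)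
    (hV : ∀ x t, 0 < t → duh N g₀ q U x t ≤ V x t) :
    ∃ u v : Euc N → ℝ → ℝ≥0∞, Measurable (Function.uncurry u) ∧ Measurable (Function.uncurry v) ∧
      (∀ x t, 0 < t → u x t ≤ U x t) ∧ (∀ x t, 0 < t → v x t ≤ V x t) ∧
      (∀ x t, u x t = duh N f₀ p v x t) ∧ (∀ x t, v x t = duh N g₀ q u x t) := by
  set F := iter N p q f₀ g₀ with hF
  have hmeas : ∀ n, Measurable (Function.uncurry (F n).1) ∧ Measurable (Function.uncurry (F n).2) := by
    intro n
    induction n with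
    | zero => exact ⟨measurable_const, measurable_const⟩
    | succ n ih => exact ⟨measurable_duh N hf₀ p ih.2, measurable_duh N hg₀ q ih.1⟩
  have hstep : ∀ n, (∀ x t, (F n).1 x t ≤ (F (n + 1)).1 x t) ∧
      (∀ x t, (F n).2 x t ≤ (F (n + 1)).2 x t) := by
    intro n
    induction n with
    | zero => exact ⟨fun x t => zero_le, fun x t => zero_le⟩
    | succ n ih =>
      exact ⟨fun x t => duh_mono N f₀ hp.le x t fun y s _ => ih.2 y s,
        fun x t => duh_mono N g₀ hq.le x t fun y s _ => ih.1 y s⟩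
  have hm1 : Monotone fun n => (F n).1 := monotone_nat_of_le_succ fun n => (hstep n).1
  have hm2 : Monotone fun n => (F n).2 := monotone_nat_of_le_succ fun n => (hstep n).2
  have hbd : ∀ n, (∀ x t, 0 < t → (F n).1 x t ≤ U x t) ∧ (∀ x t, 0 < t → (F n).2 x t ≤ V x t) := by
    intro n
    induction n with
    | zero => exact ⟨fun x t _ => zero_le, fun x t _ => zero_le⟩
    | succ n ih =>
      exact ⟨fun x t ht => (duh_mono N f₀ hp.le x t ih.2).trans (hU x t ht),
        fun x t ht => (duh_mono N g₀ hq.le x t ih.1).trans (hV x t ht)⟩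
  refine ⟨fun x t => ⨆ n, (F n).1 x t, fun x t => ⨆ n, (F n).2 x t, ?_, ?_, ?_, ?_, ?_, ?_⟩
  · exact Measurable.iSup fun n => (hmeas n).1
  · exact Measurable.iSup fun n => (hmeas n).2
  · exact fun x t ht => iSup_le fun n => (hbd n).1 x t ht
  · exact fun x t ht => iSup_le fun n => (hbd n).2 x t ht
  · intro x t
    rw [duh_iSup N f₀ hp (fun n => (hmeas n).2) hm2]
    refine le_antisymm (iSup_le fun n => ?_) (iSup_le fun n => ?_)
    · exact ((hstep n).1 x t).trans (le_iSup (fun n => duh N f₀ p (F n).2 x t) n)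
    · exact le_iSup (fun n => (F n).1 x t) (n + 1)
  · intro x t
    rw [duh_iSup N g₀ hq (fun n => (hmeas n).1) hm1]
    refine le_antisymm (iSup_le fun n => ?_) (iSup_le fun n => ?_)
    · exact ((hstep n).2 x t).trans (le_iSup (fun n => duh N g₀ q (F n).1 x t) n)
    · exact le_iSup (fun n => (F n).2 x t) (n + 1)

lemma super_ineq (N : ℕ) {z f₀ : Euc N → ℝ≥0∞} (hz : Measurable z) {m B : ℝ} (hm : 0 < m)
    (hB : 0 < B)
    (hbd : ∀ s : ℝ, 0 < s → ∀ x, hs N s z x ≤ ENNReal.ofReal (B * s ^ (-m)))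
    {a a' p e : ℝ} (hp : 0 ≤ p) (ha : 0 < a) (hae : a < e) (he1 : e ≤ 1) (heb : e ≤ a + 1 / m)
    (hb : a' * p = a + 1 / m) (hf₀ : ∀ y, f₀ y ≤ z y ^ a)
    (hsmall : 2 ^ p * (B ^ (1 / m) / (m * (e - a))) ≤ 1) {t : ℝ} (ht : 0 < t) (x : Euc N) :
    duh N f₀ p (fun y s => 2 * hs N s z y ^ a') x t ≤ 2 * hs N t z x ^ a := by
  have h1 : hs N t f₀ x ≤ hs N t z x ^ a :=
    (hs_mono N t hf₀ x).trans (hs_jensen N ht hz ha (hae.le.trans he1) x)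
  have h2 : ∫⁻ s in Set.Ioo 0 t, hs N (t - s) (fun y => (2 * hs N s z y ^ a') ^ p) x ≤
      hs N t z x ^ a := by
    have e1 : ∀ s, hs N (t - s) (fun y => (2 * hs N s z y ^ a') ^ p) x =
        2 ^ p * hs N (t - s) (fun y => hs N s z y ^ (a + 1 / m)) x := by
      intro s
      have := measurable_hs N s hz
      rw [← hs_const_mul N _ _ (by fun_prop)]
      simp_rw [ENNReal.mul_rpow_of_nonneg _ _ hp, ← ENNReal.rpow_mul, hb]
    simp_rw [e1]
    rw [lintegral_const_mul' _ _ (ENNReal.rpow_ne_top_of_nonneg hp (by simp))]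
    calc _ ≤ 2 ^ p * (ENNReal.ofReal (B ^ (1 / m) / (m * (e - a))) * hs N t z x ^ a) := by
          gcongr
          exact duhamel_bound N hz hm hB hbd ha hae he1 heb rfl ht x
      _ = ENNReal.ofReal (2 ^ p * (B ^ (1 / m) / (m * (e - a)))) * hs N t z x ^ a := by
          rw [ENNReal.ofReal_mul (by positivity), ← mul_assoc,
            ← ENNReal.ofReal_rpow_of_nonneg (by norm_num) hp]
          norm_num
      _ ≤ 1 * hs N t z x ^ a := by
          gcongr
          exact ENNReal.ofReal_le_one.2 hsmall
      _ = _ := one_mul _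
  unfold duh
  rw [two_mul]
  exact add_le_add h1 h2

lemma wnorm_dist (N : ℕ) {r δ : ℝ} (hr : 1 < r) (hδ : 0 < δ) {f : Euc N → ℝ}
    (hf : ∀ x, 0 ≤ f x) (h : wnorm N (ENNReal.ofReal r) f Set.univ ≤ ENNReal.ofReal δ)
    {l : ℝ} (hl : 0 < l) : volume {x | l < f x ^ r} ≤ ENNReal.ofReal (δ ^ r / l) := by
  have hr0 : 0 < r := by linarith
  unfold wnorm at h
  rw [if_neg (by simp [hr.ne']), if_neg ENNReal.ofReal_ne_top] at h
  have h1 := (le_iSup₂ (f := fun (l : ℝ) (_ : 0 < l) => ENNReal.ofReal l *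
    (volume {x ∈ Set.univ | l < |f x|}) ^ (1 / (ENNReal.ofReal r).toReal)) (l ^ (1 / r))
    (by positivity)).trans h
  rw [ENNReal.toReal_ofReal hr0.le] at h1
  have hset : {x | l < f x ^ r} ⊆ {x ∈ Set.univ | l ^ (1 / r) < |f x|} := by
    intro x hx
    refine ⟨trivial, ?_⟩
    rw [abs_of_nonneg (hf x)]
    have h2 := Real.rpow_lt_rpow hl.le hx (one_div_pos.2 hr0)
    rwa [← Real.rpow_mul (hf x), mul_one_div_cancel hr0.ne', Real.rpow_one] at h2
  have h3 := ENNReal.rpow_le_rpow h1 hr0.le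
  rw [ENNReal.mul_rpow_of_nonneg _ _ hr0.le, ← ENNReal.rpow_mul,
    one_div_mul_cancel hr0.ne', ENNReal.rpow_one,
    ENNReal.ofReal_rpow_of_nonneg (by positivity) hr0.le, ← Real.rpow_mul hl.le,
    one_div_mul_cancel hr0.ne', Real.rpow_one, ENNReal.ofReal_rpow_of_nonneg hδ.le hr0.le] at h3
  rw [ENNReal.ofReal_div_of_pos hl, ENNReal.le_div_iff_mul_le (by simp [hl]) (by simp), mul_comm]
  refine le_trans ?_ h3
  gcongr

lemma sum_dist (N : ℕ) {r₁ r₂ δ κ : ℝ} (hr₁ : 1 < r₁) (hr₂ : 1 < r₂) (hδ : 0 < δ) (hδ1 : δ ≤ 1)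
    (hδκ : 4 * δ ≤ κ) {f g : Euc N → ℝ}
    (hf : ∀ x, 0 ≤ f x) (hg : ∀ x, 0 ≤ g x)
    (h : wnorm N (ENNReal.ofReal r₁) f Set.univ + wnorm N (ENNReal.ofReal r₂) g Set.univ <
      ENNReal.ofReal δ)
    {l : ℝ} (hl : 0 < l) : volume {x | l < f x ^ r₁ + g x ^ r₂} ≤ ENNReal.ofReal (κ / l) := by
  have hl2 : 0 < l / 2 := by positivity
  have h1 := wnorm_dist N hr₁ hδ hf (le_self_add.trans h.le) hl2
  have h2 := wnorm_dist N hr₂ hδ hg (le_add_self.trans h.le) hl2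
  have hsub : {x | l < f x ^ r₁ + g x ^ r₂} ⊆ {x | l / 2 < f x ^ r₁} ∪ {x | l / 2 < g x ^ r₂} := by
    intro x hx
    by_contra hc
    simp only [Set.mem_union, Set.mem_ofPred_eq, not_or, not_lt] at hc hx
    linarith [hc.1, hc.2]
  refine (measure_mono hsub).trans ((measure_union_le _ _).trans ((add_le_add h1 h2).trans ?_))
  rw [← ENNReal.ofReal_add (by positivity) (by positivity)]
  refine ENNReal.ofReal_le_ofReal ?_
  have d1 : δ ^ r₁ ≤ δ := by
    simpa using Real.rpow_le_rpow_of_exponent_ge hδ hδ1 hr₁.le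
  have d2 : δ ^ r₂ ≤ δ := by
    simpa using Real.rpow_le_rpow_of_exponent_ge hδ hδ1 hr₂.le
  rw [← add_div, div_div_eq_mul_div]
  gcongr
  linarith

lemma small_aux {m c p B : ℝ} (hm : 0 < m) (hc : 0 < c) {D : ℝ} (hD : 0 < D)
    (hDc : D ≤ c / 2 ^ p) (hB : B = D ^ m) : 2 ^ p * (B ^ (1 / m) / c) ≤ 1 := by
  rw [hB, ← Real.rpow_mul hD.le, mul_one_div_cancel hm.ne', Real.rpow_one, ← mul_div_assoc,
    div_le_one hc]
  rw [le_div_iff₀ (by positivity)] at hDc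
  linarith

lemma data_le {w f θ r : ℝ} (hf : 0 ≤ f) (hθ : 0 < θ) (hr : 0 < r) (h : f ^ r ≤ w) :
    ENNReal.ofReal f ≤ ENNReal.ofReal (w ^ θ) ^ (1 / (r * θ)) := by
  have hw : 0 ≤ w := (Real.rpow_nonneg hf r).trans h
  rw [ENNReal.ofReal_rpow_of_nonneg (by positivity) (by positivity), ← Real.rpow_mul hw]
  refine ENNReal.ofReal_le_ofReal ?_
  have e : θ * (1 / (r * θ)) = 1 / r := by field_simp
  rw [e]
  have h2 := Real.rpow_le_rpow (by positivity) h (one_div_pos.2 hr).le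
  rwa [← Real.rpow_mul hf, mul_one_div_cancel hr.ne', Real.rpow_one] at h2

lemma pow_bound {Z u : ℝ≥0∞} {θ r : ℝ} (hθ : 0 < θ) (hr : 0 < r)
    (h : u ≤ 2 * Z ^ (1 / (r * θ))) (hu : u ≠ ⊤) :
    ENNReal.ofReal (u.toReal ^ r) ≤ ENNReal.ofReal (2 ^ r) * Z ^ (1 / θ) := by
  rw [← ENNReal.ofReal_rpow_of_nonneg ENNReal.toReal_nonneg hr.le, ENNReal.ofReal_toReal hu]
  refine (ENNReal.rpow_le_rpow h hr.le).trans (le_of_eq ?_)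
  rw [ENNReal.mul_rpow_of_nonneg _ _ hr.le, ← ENNReal.rpow_mul,
    ← ENNReal.ofReal_rpow_of_nonneg (by norm_num) hr.le]
  have e : 1 / (r * θ) * r = 1 / θ := by field_simp
  rw [e]
  norm_num

lemma locBdd_aux (N : ℕ) {Z : Euc N → ℝ → ℝ≥0∞} {u : Euc N → ℝ → ℝ≥0∞} {m B a : ℝ} (hm : 0 < m)
    (hB : 0 < B) (ha : 0 < a) (hZ : ∀ x s, 0 < s → Z x s ≤ ENNReal.ofReal (B * s ^ (-m)))
    (hu : ∀ x s, 0 < s → u x s ≤ 2 * Z x s ^ a) :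
    LocBdd N ⊤ (fun x t => (u x t).toReal) := by
  intro τ hτ _
  refine ⟨2 * (B * τ ^ (-m)) ^ a, fun t ht _ => Filter.Eventually.of_forall fun x => ?_⟩
  have ht0 : 0 < t := hτ.trans_le ht
  rw [abs_of_nonneg ENNReal.toReal_nonneg]
  refine ENNReal.toReal_le_of_le_ofReal (by positivity) ?_
  refine (hu x t ht0).trans ?_
  rw [ENNReal.ofReal_mul (by norm_num), ← ENNReal.ofReal_rpow_of_nonneg (by positivity) ha.le]
  have h1 : Z x t ≤ ENNReal.ofReal (B * τ ^ (-m)) := by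
    refine (hZ x t ht0).trans (ENNReal.ofReal_le_ofReal ?_)
    have := Real.rpow_le_rpow_of_nonpos hτ ht (neg_nonpos.2 hm.le)
    gcongr
  have := ENNReal.rpow_le_rpow h1 ha.le
  norm_num
  gcongr

lemma duh_toReal (N : ℕ) {p : ℝ} (hp : 0 ≤ p) {u₀ : Euc N → ℝ} {u v : Euc N → ℝ → ℝ≥0∞}
    (hu : ∀ x t, u x t = duh N (fun y => ENNReal.ofReal (u₀ y)) p v x t)
    (hut : ∀ x t, 0 < t → u x t ≠ ⊤) (hvt : ∀ x t, 0 < t → v x t ≠ ⊤) {t : ℝ} (ht : 0 < t)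
    (x : Euc N) :
    ENNReal.ofReal (u x t).toReal = heatS N t u₀ x +
      ∫⁻ s in Set.Ioo 0 t, heatS N (t - s) (fun y => (v y s).toReal ^ p) x := by
  rw [ENNReal.ofReal_toReal (hut x t ht), hu x t, duh, heatS_eq_hs N ht]
  congr 1
  refine setLIntegral_congr_fun measurableSet_Ioo fun s hs' => ?_
  rw [heatS_eq_hs N (by linarith [hs'.2])]
  congr 1
  funext y
  rw [← ENNReal.ofReal_rpow_of_nonneg ENNReal.toReal_nonneg hp,
    ENNReal.ofReal_toReal (hvt y s hs'.1)]

/-- Corollary 3.1: if `r₁* > 1` and `r₂* > 1`, there is `δ > 0` such that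
small data in `L^{r₁*,∞} × L^{r₂*,∞}` yield a global-in-time solution of (S), with the bound
`0 ≤ u^{r₁*} + v^{r₂*} ≤ C [S(t)(u₀^{r₁*}+v₀^{r₂*})^{σ/r}]^{r/σ}` for some `1 < σ ≤ r`. -/
theorem statement12 (N : ℕ) (hN : 1 ≤ N) (p q : ℝ) (hp : 0 ≤ p) (hq : 0 ≤ q)
    (hpq : 1 < p * q) (r₁s r₂s : ℝ)
    (hr₁def : r₁s = (N : ℝ) / 2 * ((p * q - 1) / (p + 1)))
    (hr₂def : r₂s = (N : ℝ) / 2 * ((p * q - 1) / (q + 1)))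
    (hr₁ : 1 < r₁s) (hr₂ : 1 < r₂s) :
    ∃ δ : ℝ, 0 < δ ∧
      ∀ u₀ v₀ : Euc N → ℝ, Measurable u₀ → Measurable v₀ →
        (∀ x, 0 ≤ u₀ x) → (∀ x, 0 ≤ v₀ x) →
        wnorm N (ENNReal.ofReal r₁s) u₀ Set.univ +
            wnorm N (ENNReal.ofReal r₂s) v₀ Set.univ < ENNReal.ofReal δ →
        ∃ u v : Euc N → ℝ → ℝ, IsSolSys N p q u₀ v₀ ⊤ u v ∧
          ∃ C σ r : ℝ, 0 < C ∧ 1 < σ ∧ σ ≤ r ∧ r ≤ min r₁s r₂s ∧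
            ∀ t : ℝ, 0 < t →
              ∀ᵐ x ∂(volume : Measure (Euc N)),
                ENNReal.ofReal (u x t ^ r₁s + v x t ^ r₂s) ≤
                  ENNReal.ofReal C *
                    heatS N t (fun y => (u₀ y ^ r₁s + v₀ y ^ r₂s) ^ (σ / r)) x ^ (r / σ) := by
  have hp0 : 0 < p := by
    rcases hp.eq_or_lt with h | h
    · rw [← h] at hpq; norm_num at hpq
    · exact h
  have hq0 : 0 < q := by
    rcases hq.eq_or_lt with h | h
    · rw [← h] at hpq; norm_num at hpq
    · exact h
  have hN0 : (0 : ℝ) < N := by exact_mod_cast hN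
  have hr10 : 0 < r₁s := by linarith
  have hr20 : 0 < r₂s := by linarith
  have hpq1 : 0 < p * q - 1 := by linarith
  set r := min r₁s r₂s with hr
  have hr1 : 1 < r := lt_min hr₁ hr₂
  have hrr1 : r ≤ r₁s := min_le_left _ _
  have hrr2 : r ≤ r₂s := min_le_right _ _
  set σ := (1 + r) / 2 with hσ
  have hσ1 : 1 < σ := by rw [hσ]; linarith
  have hσr : σ < r := by rw [hσ]; linarith
  set θ := σ / r with hθdef
  have hr0 : 0 < r := by linarith
  have hθ0 : 0 < θ := by positivity
  have hθ1 : θ < 1 := (div_lt_one hr0).2 hσr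
  have hθr : r * θ = σ := by rw [hθdef]; field_simp
  set m := (N : ℝ) * θ / 2 with hm
  have hm0 : 0 < m := by positivity
  have ha1 : 1 / (r₁s * θ) < 1 := by
    rw [div_lt_one (by positivity)]
    nlinarith
  have ha2 : 1 / (r₂s * θ) < 1 := by
    rw [div_lt_one (by positivity)]
    nlinarith
  have ha10 : 0 < 1 / (r₁s * θ) := by positivity
  have ha20 : 0 < 1 / (r₂s * θ) := by positivity
  have hb1 : 1 / (r₂s * θ) * p = 1 / (r₁s * θ) + 1 / m := by
    rw [hr₁def, hr₂def, hm]
    field_simp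
    ring
  have hb2 : 1 / (r₁s * θ) * q = 1 / (r₂s * θ) + 1 / m := by
    rw [hr₁def, hr₂def, hm]
    field_simp
    ring
  set a₁ := 1 / (r₁s * θ) with ha₁def
  set a₂ := 1 / (r₂s * θ) with ha₂def
  have hm1 : 0 < 1 / m := by positivity
  set e₁ := min 1 (a₁ + 1 / m) with he₁
  set e₂ := min 1 (a₂ + 1 / m) with he₂
  have hae1 : a₁ < e₁ := lt_min ha1 (by linarith)
  have hae2 : a₂ < e₂ := lt_min ha2 (by linarith)
  have hc1 : 0 < m * (e₁ - a₁) := mul_pos hm0 (by linarith)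
  have hc2 : 0 < m * (e₂ - a₂) := mul_pos hm0 (by linarith)
  set D := min (m * (e₁ - a₁) / 2 ^ p) (m * (e₂ - a₂) / 2 ^ q) with hD
  have hD0 : 0 < D := lt_min (by positivity) (by positivity)
  set B := D ^ m with hBdef
  have hB0 : 0 < B := by positivity
  have hs1 : 2 ^ p * (B ^ (1 / m) / (m * (e₁ - a₁))) ≤ 1 :=
    small_aux hm0 hc1 hD0 (min_le_left _ _) hBdef
  have hs2 : 2 ^ q * (B ^ (1 / m) / (m * (e₂ - a₂))) ≤ 1 :=
    small_aux hm0 hc2 hD0 (min_le_right _ _) hBdef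
  have h1θ : 0 < 1 - θ := by linarith
  set κ := (4 * Real.pi) ^ ((N : ℝ) / 2) * ((1 - θ) * B) ^ (1 / θ) with hκ
  have hκ0 : 0 < κ := by positivity
  refine ⟨min 1 (κ / 4), lt_min one_pos (by positivity), ?_⟩
  intro u₀ v₀ hu₀m hv₀m hu₀ hv₀ hsmall
  have hdist : ∀ l : ℝ, 0 < l → volume {y | l < u₀ y ^ r₁s + v₀ y ^ r₂s} ≤
      ENNReal.ofReal (κ / l) := fun l hl =>
    sum_dist N hr₁ hr₂ (lt_min one_pos (by positivity)) (min_le_left _ _)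
      (by linarith [min_le_right 1 (κ / 4)]) hu₀ hv₀ hsmall hl
  set w : Euc N → ℝ := fun y => u₀ y ^ r₁s + v₀ y ^ r₂s with hw
  have hwm : Measurable w := by fun_prop
  have hw0 : ∀ y, 0 ≤ w y := fun y =>
    add_nonneg (Real.rpow_nonneg (hu₀ y) _) (Real.rpow_nonneg (hv₀ y) _)
  set z : Euc N → ℝ≥0∞ := fun y => ENNReal.ofReal (w y ^ θ) with hz
  have hzm : Measurable z := by fun_prop
  have hbd : ∀ s : ℝ, 0 < s → ∀ x, hs N s z x ≤ ENNReal.ofReal (B * s ^ (-m)) := by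
    intro s hs0 x
    refine (hs_weak_bound N hs0 hwm hw0 hθ0 hθ1 hκ0 hdist x).trans (le_of_eq ?_)
    congr 1
    have q1 : 0 < 4 * Real.pi := by positivity
    have e1 : (4 * Real.pi * s) ^ (-(N : ℝ) / 2) * κ =
        s ^ (-(N : ℝ) / 2) * ((1 - θ) * B) ^ (1 / θ) := by
      rw [hκ, Real.mul_rpow q1.le hs0.le, neg_div, Real.rpow_neg q1.le]
      have : (4 * Real.pi) ^ ((N : ℝ) / 2) ≠ 0 := by positivity
      generalize (4 * Real.pi) ^ ((N : ℝ) / 2) = P at *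
      field_simp
    rw [e1, Real.mul_rpow (by positivity) (by positivity), ← Real.rpow_mul hs0.le,
      ← Real.rpow_mul (by positivity), one_div_mul_cancel hθ0.ne', Real.rpow_one,
      show -(N : ℝ) / 2 * θ = -m by rw [hm]; ring]
    field_simp
  obtain ⟨u, v, hum, hvm, huU, hvV, hufix, hvfix⟩ := exists_fixed N hp0 hq0
    (f₀ := fun y => ENNReal.ofReal (u₀ y)) (g₀ := fun y => ENNReal.ofReal (v₀ y))
    (by fun_prop) (by fun_prop)
    (U := fun x t => 2 * hs N t z x ^ a₁) (V := fun x t => 2 * hs N t z x ^ a₂)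
    (fun x t ht => super_ineq N hzm hm0 hB0 hbd hp ha10 hae1 (min_le_left _ _) (min_le_right _ _)
      hb1 (fun y => data_le (hu₀ y) hθ0 hr10
        (le_add_of_nonneg_right (Real.rpow_nonneg (hv₀ y) _))) hs1 ht x)
    (fun x t ht => super_ineq N hzm hm0 hB0 hbd hq ha20 hae2 (min_le_left _ _) (min_le_right _ _)
      hb2 (fun y => data_le (hv₀ y) hθ0 hr20
        (le_add_of_nonneg_left (Real.rpow_nonneg (hu₀ y) _))) hs2 ht x)
  have hZt : ∀ x t, 0 < t → hs N t z x ≠ ⊤ := fun x t ht =>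
    ne_top_of_le_ne_top ENNReal.ofReal_ne_top (hbd t ht x)
  have hut : ∀ x t, 0 < t → u x t ≠ ⊤ := fun x t ht =>
    ne_top_of_le_ne_top (ENNReal.mul_ne_top (by simp)
      (ENNReal.rpow_ne_top_of_nonneg ha10.le (hZt x t ht))) (huU x t ht)
  have hvt : ∀ x t, 0 < t → v x t ≠ ⊤ := fun x t ht =>
    ne_top_of_le_ne_top (ENNReal.mul_ne_top (by simp)
      (ENNReal.rpow_ne_top_of_nonneg ha20.le (hZt x t ht))) (hvV x t ht)
  refine ⟨fun x t => (u x t).toReal, fun x t => (v x t).toReal, ⟨⟨fun _ _ => ENNReal.toReal_nonneg,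
    fun _ _ => ENNReal.toReal_nonneg, hum.ennreal_toReal, hvm.ennreal_toReal, ?_, ?_⟩, ?_⟩, ?_⟩
  · exact locBdd_aux N (Z := fun x t => hs N t z x) hm0 hB0 ha10 (fun x s h => hbd s h x) huU
  · exact locBdd_aux N (Z := fun x t => hs N t z x) hm0 hB0 ha20 (fun x s h => hbd s h x) hvV
  · intro t ht _
    exact ⟨Filter.Eventually.of_forall fun x => duh_toReal N hp hufix hut hvt ht x,
      Filter.Eventually.of_forall fun x => duh_toReal N hq hvfix hvt hut ht x⟩
  · refine ⟨2 ^ r₁s + 2 ^ r₂s, σ, r, by positivity, hσ1, hσr.le, le_rfl, fun t ht =>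
      Filter.Eventually.of_forall fun x => ?_⟩
    rw [heatS_eq_hs N ht, ENNReal.ofReal_add (by positivity) (by positivity),
      ENNReal.ofReal_add (by positivity) (by positivity), add_mul]
    have hrσ : r / σ = 1 / θ := by rw [hθdef, one_div_div]
    rw [hrσ]
    exact add_le_add (pow_bound hθ0 hr10 (huU x t ht) (hut x t ht))
      (pow_bound hθ0 hr20 (hvV x t ht) (hvt x t ht))
end
end
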